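/- There exist a rank-one transformation T of an infinite σ-finite measure space and an increasing sequence (m_i) of positive integers such that T is subsequence rationally weakly mixing along (m_i): with F = I the unit interval, for all measurable A, B ⊆ I one has (1/a_{m_i}(I)) ∑_{k=0}^{m_i−1} |μ(A ∩ T^k B) − μ(A)μ(B) u_k(I)| → 0 as i → ∞. -/

import Mathlib

open MeasureTheory Filter Set Pointwise

/-- A rank-one cutting-and-stacking transformation of a subset `X ⊆ ℝ` (with Lebesgue
measure), given by columns `C n` consisting of `h n` levels (open intervals) of width `w n`,
with `pos n j` the left endpoint of the level of height `j` in column `C n`; column `C (n+1)`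
is obtained from `C n` by cutting into `r n ≥ 2` subcolumns of equal width, adding `s n k`
spacers above the `k`-th subcolumn, and stacking. -/
structure RankOne where
  X : Set ℝ
  T : ℝ ≃ᵐ ℝ
  r : ℕ → ℕ
  s : ℕ → ℕ → ℕ
  h : ℕ → ℕ
  w : ℕ → ℝ
  pos : ℕ → ℕ → ℝ
  hr : ∀ n, 2 ≤ r n
  h0 : h 0 = 1
  w0 : w 0 = 1
  pos0 : pos 0 0 = 0
  hrec : ∀ n, h (n + 1) = ∑ k ∈ Finset.range (r n), (h n + s n k)
  wrec : ∀ n, w (n + 1) = w n / (r n : ℝ)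
  hX : X = ⋃ n, ⋃ j < h n, Set.Ioo (pos n j) (pos n j + w n)
  disj : ∀ n, ∀ j < h n, ∀ j' < h n, j ≠ j' →
    Disjoint (Set.Ioo (pos n j) (pos n j + w n)) (Set.Ioo (pos n j') (pos n j' + w n))
  stack : ∀ n, ∀ j < h n, ∀ k < r n,
    pos (n + 1) ((∑ i ∈ Finset.range k, (h n + s n i)) + j) = pos n j + (k : ℝ) * w (n + 1)
  Tmap : ∀ n j, j + 1 < h n → ∀ x ∈ Set.Ioo (pos n j) (pos n j + w n),
    T x = x + (pos n (j + 1) - pos n j)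
  Tbij : Set.BijOn (⇑T) X X
  Tpres : MeasurePreserving (⇑T) (volume.restrict X) (volume.restrict X)

namespace RankOne

/-- The level of height `j` in column `C n`. -/
def lvl (S : RankOne) (n j : ℕ) : Set ℝ := Set.Ioo (S.pos n j) (S.pos n j + S.w n)

/-- The measure on the space: Lebesgue measure restricted to `X`. -/
noncomputable def μ (S : RankOne) : Measure ℝ := volume.restrict S.X

/-- The intrinsic weight sequence `u n F = μ(F ∩ TⁿF) / μ(F)²`. -/
noncomputable def u (S : RankOne) (F : Set ℝ) (n : ℕ) : ℝ :=
  (S.μ (F ∩ (⇑S.T)^[n] '' F)).toReal / (S.μ F).toReal ^ 2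

/-- `a n F = ∑_{k<n} u k F`. -/
noncomputable def a (S : RankOne) (F : Set ℝ) (n : ℕ) : ℝ :=
  ∑ k ∈ Finset.range n, S.u F k

/-- `T` is normal if spacers are added above the rightmost subcolumn infinitely often. -/
def Normal (S : RankOne) : Prop := ∀ m, ∃ n, m ≤ n ∧ 0 < S.s n (S.r n - 1)

/-- `T` grows exponentially: `2 s_{n, r_n - 1} ≥ h_{n+1}` for every `n`. -/
def ExpGrowing (S : RankOne) : Prop := ∀ n, S.h (n + 1) ≤ 2 * S.s n (S.r n - 1)

/-- `T` has a bounded number of cuts: `sup r_n < ∞`. -/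
def BoundedCuts (S : RankOne) : Prop := ∃ c, ∀ n, S.r n ≤ c

/-- `H n = {0} ∪ {∑_{k≤i} (h n + s n k) : 0 ≤ i < r n - 1}`. -/
def Hset (S : RankOne) (n : ℕ) : Finset ℕ :=
  insert 0 ((Finset.range (S.r n - 1)).image fun i => ∑ k ∈ Finset.range (i + 1), (S.h n + S.s n k))

/-- The set of heights in column `C N` of the descendants of the level of height `p`
in column `C j`: `D(J, N) = p + H j ⊕ H (j+1) ⊕ ⋯ ⊕ H (N-1)`. -/
def desc (S : RankOne) (j p : ℕ) : ℕ → Finset ℕ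
  | 0 => {p}
  | N + 1 => if N < j then {p} else desc S j p N + S.Hset N

/-- `M m`: the maximal height of a descendant of the unit interval `I` in column `C m`. -/
def M (S : RankOne) (m : ℕ) : ℕ := (S.desc 0 0 m).sup id

/-- The ergodic sum `S_n(1_F)(x) = ∑_{k<n} 1_F(T^k x)`. -/
noncomputable def birkhoff (S : RankOne) (F : Set ℝ) (n : ℕ) (x : ℝ) : ℝ :=
  ∑ k ∈ Finset.range n, Set.indicator F (fun _ => (1 : ℝ)) ((⇑S.T)^[k] x)

/-- `T` is rationally weakly mixing on `F`. -/
def RWMOn (S : RankOne) (F : Set ℝ) : Prop :=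
  MeasurableSet F ∧ 0 < S.μ F ∧ S.μ F ≠ ⊤ ∧
  ∀ A B : Set ℝ, MeasurableSet A → A ⊆ F → MeasurableSet B → B ⊆ F →
    Tendsto (fun n => (S.a F n)⁻¹ *
      ∑ k ∈ Finset.range n,
        |(S.μ (A ∩ (⇑S.T)^[k] '' B)).toReal - (S.μ A).toReal * (S.μ B).toReal * S.u F k|)
      atTop (nhds 0)

/-- `T` is rationally weakly mixing. -/
def RWM (S : RankOne) : Prop := ∃ F, S.RWMOn F

/-- `T` is rationally ergodic: some set `F` of positive finite measure satisfies a
Renyi inequality. -/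
def RatErgodic (S : RankOne) : Prop :=
  ∃ (F : Set ℝ) (c : ℝ), MeasurableSet F ∧ 0 < S.μ F ∧ S.μ F ≠ ⊤ ∧
    ∀ n, ∫ x in F, (S.birkhoff F n x) ^ 2 ∂S.μ ≤ c * (∫ x in F, S.birkhoff F n x ∂S.μ) ^ 2

/-- `T` is spectrally weakly mixing: every bounded measurable eigenfunction is a.e. constant. -/
def SpecWM (S : RankOne) : Prop :=
  ∀ (f : ℝ → ℂ) (z : ℂ), Measurable f → (∃ C, ∀ᵐ x ∂S.μ, ‖f x‖ ≤ C) →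
    (∀ᵐ x ∂S.μ, f (S.T x) = z * f x) → ∃ c : ℂ, ∀ᵐ x ∂S.μ, f x = c

/-- `T` is zero-type: `μ(A ∩ TⁿA) → 0` for all `A` of finite measure. -/
def ZeroType (S : RankOne) : Prop :=
  ∀ A : Set ℝ, MeasurableSet A → S.μ A ≠ ⊤ →
    Tendsto (fun n => S.μ (A ∩ (⇑S.T)^[n] '' A)) atTop (nhds 0)

/-- The `i`-th nonzero element of `H n` (for `i < r n - 1`): `e n i = ∑_{k ≤ i} (h n + s n k)`. -/
def e (S : RankOne) (n i : ℕ) : ℕ := ∑ k ∈ Finset.range (i + 1), (S.h n + S.s n k)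

/-- `T` is steep: listing the nonzero elements of `H 0`, then `H 1`, etc., as `t 1, t 2, …`,
each successive element is at least `4` times the previous one. -/
def Steep (S : RankOne) : Prop :=
  (∀ n i, i + 2 < S.r n → 4 * S.e n i ≤ S.e n (i + 1)) ∧
  (∀ n, 4 * S.e n (S.r n - 2) ≤ S.e (n + 1) 0)

/-- `T` is almost steep. -/
def AlmostSteep (S : RankOne) : Prop :=
  ∀ n, 3 ≤ S.r n ∧ S.s n 0 = 0 ∧ S.s n 1 = 1 ∧
    ∀ i, 2 ≤ i → i ≤ S.r n - 1 →
      4 * (∑ k ∈ Finset.range i, (S.h n + S.s n k)) ≤ ∑ k ∈ Finset.range (i + 1), (S.h n + S.s n k)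

/-- `A` is a finite union of levels of `T`. -/
def FinUnionLevels (S : RankOne) (A : Set ℝ) : Prop :=
  ∃ q : Finset (ℕ × ℕ), (∀ v ∈ q, v.2 < S.h v.1) ∧ A = ⋃ v ∈ q, S.lvl v.1 v.2

end RankOne

/-!
Cut column `n` into `n + 2` subcolumns, put `k` spacers above the `k`-th one for `k ≤ n` (a
staircase), and then so many spacers above the last one that they fill half of column `n + 1`.
The measure is infinite because each step at least doubles the total measure. Take
`m_i = h_{i+1} / 2`: all visits to `I` up to time `m_i` are then visible inside column `i + 1`.

For sets made of levels of column `j`, the correlations `μ(A ∩ T^k B)`, `k < m_i`, are counted by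
the differences of descendants in column `i + 1` of a level of column `j`, shifted by the difference
of the heights of two levels. Passing from column `n` to column `n + 1` mixes the distribution of
these differences with its own shifts by one: if `v` bounds the total variation between the
distribution and its shift by one, the next bound is `(1 - r / (r + 1)²) v + 2 / (r + 1)²` with
`r = n + 1`, and these bounds tend to `0` because `∑ 1 / n = ∞`. Hence in the limit the correlations
do not see the positions of the levels, which forces `μ(A ∩ T^k B)` close to `μ(A) μ(B) u_k(I)` in
the mean. General `A`, `B` are approximated by unions of levels; the error is controlled because a
point visits `I` at most `d` times before time `m_i`, where `d ≤ 2 a_{m_i}(I)` is the number of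
descendants of `I` in column `i + 1`.
-/

/-! ### Stacking offsets and level widths -/

section Generic

/-- The height at which the `k`-th copy of a column of height `h` starts when copies of it are
stacked with `s i` spacers above the `i`-th one. -/
def stackOffset (h : ℕ) (s : ℕ → ℕ) (k : ℕ) : ℕ := ∑ i ∈ Finset.range k, (h + s i)

lemma stackOffset_succ (h : ℕ) (s : ℕ → ℕ) (k : ℕ) :
    stackOffset h s (k + 1) = stackOffset h s k + (h + s k) :=
  Finset.sum_range_succ _ _

lemma stackOffset_mono (h : ℕ) (s : ℕ → ℕ) : Monotone (stackOffset h s) :=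
  monotone_nat_of_le_succ fun k => by rw [stackOffset_succ]; omega

lemma stackOffset_add_inj {h : ℕ} {s : ℕ → ℕ} {k k' j j' : ℕ} (hj : j < h) (hj' : j' < h)
    (heq : stackOffset h s k + j = stackOffset h s k' + j') : k = k' ∧ j = j' := by
  have key {k k' : ℕ} (hk : k < k') : stackOffset h s k + h ≤ stackOffset h s k' := by
    have := stackOffset_mono h s (Nat.succ_le_of_lt hk)
    rw [Nat.succ_eq_add_one, stackOffset_succ] at this
    omega
  rcases lt_trichotomy k k' with hk | rfl | hk
  · have := key hk; omega
  · exact ⟨rfl, by omega⟩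
  · have := key hk; omega

lemma stackOffset_add_add_lt {h r : ℕ} (s : ℕ → ℕ) {k j : ℕ} (hj : j < h) (hk : k < r) :
    stackOffset h s k + j + s (r - 1) < stackOffset h s r := by
  obtain ⟨r, rfl⟩ : ∃ r', r = r' + 1 := ⟨r - 1, by omega⟩
  have := stackOffset_mono h s (Nat.le_of_lt_succ hk)
  rw [stackOffset_succ, Nat.add_sub_cancel]
  omega

variable {w : ℕ → ℝ} {r : ℕ → ℕ}

lemma width_pos (hr : ∀ n, 2 ≤ r n) (w_zero : w 0 = 1) (w_succ : ∀ n, w (n + 1) = w n / r n)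
    (n : ℕ) : 0 < w n := by
  induction n with
  | zero => rw [w_zero]; exact one_pos
  | succ n ih =>
    rw [w_succ]
    exact div_pos ih (by exact_mod_cast two_pos.trans_le (hr n))

lemma width_succ_le (hr : ∀ n, 2 ≤ r n) (w_zero : w 0 = 1) (w_succ : ∀ n, w (n + 1) = w n / r n)
    (n : ℕ) : w (n + 1) ≤ w n / 2 := by
  rw [w_succ]
  exact div_le_div_of_nonneg_left (width_pos hr w_zero w_succ n).le two_pos
    (by exact_mod_cast hr n)

lemma tendsto_width_zero (hr : ∀ n, 2 ≤ r n) (w_zero : w 0 = 1)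
    (w_succ : ∀ n, w (n + 1) = w n / r n) : Tendsto w atTop (nhds 0) := by
  have bound (n : ℕ) : w n ≤ (1 / 2) ^ n := by
    induction n with
    | zero => rw [w_zero, pow_zero]
    | succ n ih =>
      have := width_succ_le hr w_zero w_succ n
      rw [pow_succ]
      linarith
  exact squeeze_zero (fun n => (width_pos hr w_zero w_succ n).le) bound
    (tendsto_pow_atTop_nhds_zero_of_lt_one (by norm_num) (by norm_num))

/-! ### Measure theory -/

lemma bijOn_union_of_disjoint {α β : Type*} {f : α → β} {s s' : Set α} {t t' : Set β}
    (h : BijOn f s t) (h' : BijOn f s' t') (ht : Disjoint t t') :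
    BijOn f (s ∪ s') (t ∪ t') := by
  refine h.union h' ?_
  rintro x (hx | hx) y (hy | hy) hxy
  · exact h.injOn hx hy hxy
  · exact absurd (hxy ▸ h'.mapsTo hy) (disjoint_left.1 ht (h.mapsTo hx))
  · exact absurd (h'.mapsTo hx) (disjoint_left.1 ht (hxy ▸ h.mapsTo hy))
  · exact h'.injOn hx hy hxy

/-- A bijection between `D, R ⊆ X` extends to a permutation of `X` as soon as `X \ D` and `X \ R`
are countably infinite, and to the whole space by the identity. -/
lemma exists_bijective_extending {α : Type*} {f : α → α} {D R X : Set α} (hf : BijOn f D R)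
    (hDX : D ⊆ X) (hRX : R ⊆ X) (hD : (X \ D).Countable) (hR : (X \ R).Countable)
    (hD' : (X \ D).Infinite) (hR' : (X \ R).Infinite) :
    ∃ T : α → α, Function.Bijective T ∧ EqOn T f D ∧ BijOn T X X ∧ EqOn T id Xᶜ := by
  classical
  have := hD.to_subtype
  have := hR.to_subtype
  have := hD'.to_subtype
  have := hR'.to_subtype
  obtain ⟨e⟩ : Nonempty (↥(X \ D) ≃ ↥(X \ R)) := nonempty_equiv_of_countable
  let g : α → α := fun x => if hx : x ∈ X \ D then e ⟨x, hx⟩ else x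
  have g_eq (x : ↥(X \ D)) : g x = e x := dif_pos x.2
  let T := D.piecewise f g
  have T_eqOn_f : EqOn T f D := piecewise_eqOn D f g
  have T_eqOn_g : EqOn T g (X \ D) := (piecewise_eqOn_compl D f g).mono fun x hx => hx.2
  have T_eqOn_id : EqOn T id Xᶜ := fun x hx =>
    (piecewise_eq_of_notMem D f g fun h => hx (hDX h)).trans (dif_neg fun h => hx h.1)
  have g_bijOn : BijOn g (X \ D) (X \ R) := by
    refine ⟨fun x hx => ?_, fun x hx y hy hxy => ?_, fun y hy => ?_⟩
    · exact g_eq ⟨x, hx⟩ ▸ (e ⟨x, hx⟩).2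
    · rw [g_eq ⟨x, hx⟩, g_eq ⟨y, hy⟩] at hxy
      exact congrArg Subtype.val (e.injective (Subtype.ext hxy))
    · exact ⟨e.symm ⟨y, hy⟩, (e.symm ⟨y, hy⟩).2, by rw [g_eq, e.apply_symm_apply]⟩
  have T_bijOn : BijOn T X X := by
    have := bijOn_union_of_disjoint (hf.congr T_eqOn_f.symm) (g_bijOn.congr T_eqOn_g.symm)
      disjoint_sdiff_right
    rwa [union_sdiff_cancel hDX, union_sdiff_cancel hRX] at this
  have T_bijOn_univ : BijOn T univ univ := by
    have := bijOn_union_of_disjoint T_bijOn ((bijOn_id Xᶜ).congr T_eqOn_id.symm)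
      disjoint_compl_right
    rwa [union_compl_self] at this
  exact ⟨T, bijOn_univ.1 T_bijOn_univ, T_eqOn_f, T_bijOn, T_eqOn_id⟩

lemma exists_measurableEquiv_extending {α : Type*} [MeasurableSpace α] [StandardBorelSpace α]
    {f : α → α} {D R X : Set α} (hf : BijOn f D R) (hDm : MeasurableSet D)
    (hfm : Measurable (D.domRestrict f)) (hDX : D ⊆ X) (hRX : R ⊆ X)
    (hD : (X \ D).Countable) (hR : (X \ R).Countable)
    (hD' : (X \ D).Infinite) (hR' : (X \ R).Infinite) :
    ∃ T : α ≃ᵐ α, EqOn T f D ∧ BijOn T X X := by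
  classical
  obtain ⟨T, T_bijective, T_eqOn_f, T_bijOn, T_eqOn_id⟩ :=
    exists_bijective_extending hf hDX hRX hD hR hD' hR'
  have piecewise_measurable : Measurable (D.piecewise f id) := by
    refine measurable_of_restrict_of_restrict_compl hDm ?_ ?_
    · rwa [domRestrict_piecewise]
    · rw [domRestrict_piecewise_compl]
      exact measurable_subtype_coe
  have T_measurable : Measurable T := by
    refine piecewise_measurable.measurable_of_countable_ne (hD.mono fun x hx => ?_)
    by_contra hxXD
    apply hx
    by_cases hxD : x ∈ D
    · rw [T_eqOn_f hxD, piecewise_eq_of_mem _ _ _ hxD]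
    · rw [T_eqOn_id fun h => hxXD ⟨h, hxD⟩, piecewise_eq_of_notMem _ _ _ hxD]
  have T_embedding := T_measurable.measurableEmbedding T_bijective.injective
  refine ⟨⟨Equiv.ofBijective T T_bijective, T_measurable, fun s hs => ?_⟩, T_eqOn_f, T_bijOn⟩
  rw [← Equiv.image_eq_preimage_symm]
  exact T_embedding.measurableSet_image.2 hs

lemma measurePreserving_restrict_of_hasDerivAt_one (T : ℝ ≃ᵐ ℝ) {D R X : Set ℝ}
    (hD : MeasurableSet D) (hTD : T '' D = R) (hDX : D =ᵐ[volume] X) (hRX : R =ᵐ[volume] X)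
    (hT : ∀ x ∈ D, HasDerivAt T 1 x) :
    MeasurePreserving T (volume.restrict X) (volume.restrict X) := by
  rw [← Measure.restrict_congr_set hDX]
  nth_rw 2 [Measure.restrict_congr_set hDX]
  rw [← Measure.restrict_congr_set hRX]
  refine ⟨T.measurable, Measure.ext fun B hB => ?_⟩
  have hBm := T.measurable hB
  have image_eq : T '' (T ⁻¹' B ∩ D) = B ∩ R := by
    rw [image_preimage_inter, hTD]
  have change_of_variables := lintegral_image_eq_lintegral_abs_deriv_mul (f' := fun _ => 1)
    (hBm.inter hD) (fun x hx => (hT x hx.2).hasDerivWithinAt) T.injective.injOn (fun _ => 1)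
  rw [Measure.map_apply T.measurable hB, Measure.restrict_apply hBm, Measure.restrict_apply hB,
    ← image_eq]
  simpa using change_of_variables.symm

open Classical in
lemma sum_measureReal_inter_le {α ι : Type*} [MeasurableSpace α] {μ : Measure α} {E : Set α}
    (hE : MeasurableSet E) (hE' : μ E ≠ ⊤) (s : Finset ι) {F : ι → Set α}
    (hF : ∀ i ∈ s, MeasurableSet (F i)) {c : ℕ}
    (hc : ∀ x ∈ E, (s.filter fun i => x ∈ F i).card ≤ c) :
    ∑ i ∈ s, μ.real (E ∩ F i) ≤ c * μ.real E := by
  have count_eq (x : α) :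
      ∑ i ∈ s, (F i).indicator (1 : α → ENNReal) x = (s.filter fun i => x ∈ F i).card := by
    simp [indicator_apply]
  have lintegral_count : ∑ i ∈ s, μ (E ∩ F i) ≤ c * μ E := by
    calc ∑ i ∈ s, μ (E ∩ F i)
        = ∫⁻ x in E, ∑ i ∈ s, (F i).indicator 1 x ∂μ := by
          rw [lintegral_finsetSum' s fun i hi => (measurable_one.indicator (hF i hi)).aemeasurable]
          refine Finset.sum_congr rfl fun i hi => ?_
          rw [lintegral_indicator_one (hF i hi), Measure.restrict_apply (hF i hi), inter_comm]
      _ ≤ ∫⁻ _ in E, c ∂μ := by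
          refine setLIntegral_mono' hE fun x hx => ?_
          rw [count_eq]
          exact_mod_cast hc x hx
      _ = c * μ E := setLIntegral_const E _
  have inter_ne_top (i : ι) : μ (E ∩ F i) ≠ ⊤ := measure_ne_top_of_subset inter_subset_left hE'
  have toReal_le := ENNReal.toReal_mono (ENNReal.mul_ne_top (ENNReal.natCast_ne_top c) hE')
    lintegral_count
  rwa [ENNReal.toReal_sum fun i _ => inter_ne_top i, ENNReal.toReal_mul,
    ENNReal.toReal_natCast] at toReal_le

end Generic

/-! ### Existence of rank-one transformations with prescribed cuts and spacers -/

/-- Cutting parameters of a rank-one construction: column `n` is cut into `r n` subcolumns and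
`s n k` spacers are put above the `k`-th one. A spacer on top of the last subcolumn is required at
every stage, so that the heights of the top levels increase without bound. -/
structure CutStack where
  r : ℕ → ℕ
  s : ℕ → ℕ → ℕ
  two_le_r : ∀ n, 2 ≤ r n
  last_spacer_pos : ∀ n, 0 < s n (r n - 1)

namespace CutStack

variable (C : CutStack)

/-- The number of levels of column `n`. -/
def height : ℕ → ℕ
  | 0 => 1
  | n + 1 => stackOffset (height n) (C.s n) (C.r n)

/-- The height in column `n + 1` of the bottom level of the `k`-th copy of column `n`. -/
def offset (n : ℕ) : ℕ → ℕ := stackOffset (C.height n) (C.s n)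

/-- The width of the levels of column `n`. -/
noncomputable def width : ℕ → ℝ
  | 0 => 1
  | n + 1 => width n / C.r n

/-- All levels of column `n` lie in `(0, ceiling n * width n)`. -/
def ceiling : ℕ → ℕ
  | 0 => 1
  | n + 1 => ceiling n * C.r n + C.height (n + 1)

open Classical in
/-- The index of the level of height `i` of column `n` among the intervals
`(q * width n, (q + 1) * width n)`. New spacers are placed to the right of everything used
before. -/
noncomputable def cell : ℕ → ℕ → ℕ
  | 0, _ => 0
  | n + 1, i =>
    if hi : ∃ p : ℕ × ℕ, p.2 < C.height n ∧ p.1 < C.r n ∧ i = C.offset n p.1 + p.2 then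
      cell n hi.choose.2 * C.r n + hi.choose.1
    else C.ceiling n * C.r n + i

/-- The left endpoint of the level of height `j` of column `n`. -/
noncomputable def left (n j : ℕ) : ℝ := C.cell n j * C.width n

/-- The level of height `j` of column `n`. -/
def level (n j : ℕ) : Set ℝ := Ioo (C.left n j) (C.left n j + C.width n)

/-- The endpoints of all intervals of generation `n`. -/
def grid (n : ℕ) : Set ℝ := range fun z : ℤ => z * C.width n

/-- The vector by which the level of height `j` of column `n` is moved onto the next level. -/
noncomputable def translation (n j : ℕ) : ℝ := C.left n (j + 1) - C.left n j

/-- The union of all levels of all columns. -/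
def space : Set ℝ := ⋃ n, ⋃ j < C.height n, C.level n j

/-- The points lying below the top level of some column. -/
def domain : Set ℝ := {x | ∃ n j, j + 1 < C.height n ∧ x ∈ C.level n j}

/-- The points lying above the bottom level of some column. -/
def codomain : Set ℝ := {x | ∃ n j, j + 1 < C.height n ∧ x ∈ C.level n (j + 1)}

open Classical in
/-- The transformation moving each point of `domain` to the point directly above it. -/
noncomputable def shift (x : ℝ) : ℝ :=
  if hx : ∃ p : ℕ × ℕ, p.2 + 1 < C.height p.1 ∧ x ∈ C.level p.1 p.2 then
    x + C.translation hx.choose.1 hx.choose.2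
  else x

variable {C} {n n' j j' k : ℕ} {x x' : ℝ}

lemma r_pos (n : ℕ) : 0 < C.r n := two_pos.trans_le (C.two_le_r n)

lemma width_pos (n : ℕ) : 0 < C.width n :=
  _root_.width_pos C.two_le_r rfl (fun _ => rfl) n

lemma tendsto_width : Tendsto C.width atTop (nhds 0) :=
  tendsto_width_zero C.two_le_r rfl fun _ => rfl

lemma width_eq_mul_succ (n : ℕ) : C.width n = C.r n * C.width (n + 1) := by
  have := r_pos (C := C) n
  rw [width]
  field_simp

lemma strictAnti_width : StrictAnti C.width :=
  strictAnti_nat_of_succ_lt fun n => by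
    have : C.width (n + 1) ≤ C.width n / 2 := width_succ_le C.two_le_r rfl (fun _ => rfl) n
    linarith [width_pos (C := C) n]

lemma offset_add_inj (hj : j < C.height n) (hj' : j' < C.height n) {k' : ℕ}
    (heq : C.offset n k + j = C.offset n k' + j') : k = k' ∧ j = j' :=
  stackOffset_add_inj hj hj' heq

lemma offset_add_add_one_lt_height (hj : j < C.height n) (hk : k < C.r n) :
    C.offset n k + j + 1 < C.height (n + 1) := by
  have : C.offset n k + j + C.s n (C.r n - 1) < C.height (n + 1) := stackOffset_add_add_lt _ hj hk
  have := C.last_spacer_pos n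
  omega

lemma height_pos (n : ℕ) : 0 < C.height n := by
  induction n with
  | zero => exact one_pos
  | succ n ih => have := offset_add_add_one_lt_height ih (r_pos n); omega

lemma cell_offset_add (hj : j < C.height n) (hk : k < C.r n) :
    C.cell (n + 1) (C.offset n k + j) = C.cell n j * C.r n + k := by
  have h : ∃ p : ℕ × ℕ, p.2 < C.height n ∧ p.1 < C.r n ∧
      C.offset n k + j = C.offset n p.1 + p.2 := ⟨(k, j), hj, hk, rfl⟩
  obtain ⟨hj', -, heq⟩ := h.choose_spec
  obtain ⟨hk_eq, hj_eq⟩ := offset_add_inj hj hj' heq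
  rw [cell, dif_pos h, ← hk_eq, ← hj_eq]

variable (C) in
lemma exists_offset_add_or_cell_succ_eq (n i : ℕ) :
    (∃ k < C.r n, ∃ j < C.height n, i = C.offset n k + j) ∨
      C.cell (n + 1) i = C.ceiling n * C.r n + i := by
  by_cases hi : ∃ p : ℕ × ℕ, p.2 < C.height n ∧ p.1 < C.r n ∧ i = C.offset n p.1 + p.2
  · obtain ⟨⟨k, j⟩, hj, hk, rfl⟩ := hi
    exact .inl ⟨k, hk, j, hj, rfl⟩
  · exact .inr (by rw [cell, dif_neg hi])

lemma mul_add_lt_mul {a b c r : ℕ} (hab : a < b) (hc : c < r) : a * r + c < b * r :=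
  calc a * r + c < (a + 1) * r := by rw [add_one_mul]; omega
    _ ≤ b * r := Nat.mul_le_mul_right r hab

lemma cell_lt_ceiling {i : ℕ} (hi : i < C.height n) : C.cell n i < C.ceiling n := by
  induction n generalizing i with
  | zero => exact one_pos
  | succ n ih =>
    rw [ceiling]
    rcases C.exists_offset_add_or_cell_succ_eq n i with ⟨k, hk, j, hj, rfl⟩ | h
    · rw [cell_offset_add hj hk]
      have := mul_add_lt_mul (ih hj) hk
      omega
    · omega

lemma cell_injOn (n : ℕ) : InjOn (C.cell n) (Iio (C.height n)) := by
  induction n with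
  | zero =>
    intro i hi i' hi' _
    simp only [height, mem_Iio] at hi hi'
    omega
  | succ n ih =>
    intro i hi i' hi' heq
    rcases C.exists_offset_add_or_cell_succ_eq n i with ⟨k, hk, j, hj, rfl⟩ | h <;>
      rcases C.exists_offset_add_or_cell_succ_eq n i' with ⟨k', hk', j', hj', rfl⟩ | h'
    · rw [cell_offset_add hj hk, cell_offset_add hj' hk', mul_comm _ (C.r n),
        mul_comm _ (C.r n)] at heq
      have hcell : C.cell n j = C.cell n j' := by
        simpa [Nat.mul_add_div (r_pos n), Nat.div_eq_of_lt hk, Nat.div_eq_of_lt hk']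
          using congrArg (· / C.r n) heq
      have hk_eq : k = k' := by
        rw [hcell] at heq
        omega
      rw [hk_eq, ih hj hj' hcell]
    · rw [cell_offset_add hj hk] at heq
      have := mul_add_lt_mul (cell_lt_ceiling hj) hk
      omega
    · rw [cell_offset_add hj' hk'] at heq
      have := mul_add_lt_mul (cell_lt_ceiling hj') hk'
      omega
    · omega

lemma mem_level :
    x ∈ C.level n j ↔ C.cell n j * C.width n < x ∧ x < (C.cell n j + 1) * C.width n := by
  rw [level, left, mem_Ioo, add_one_mul]

lemma left_offset_add (hj : j < C.height n) (hk : k < C.r n) :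
    C.left (n + 1) (C.offset n k + j) = C.left n j + k * C.width (n + 1) := by
  rw [left, left, cell_offset_add hj hk, width_eq_mul_succ n]
  push_cast
  ring

lemma eq_of_mem_level (hj : j < C.height n) (hj' : j' < C.height n) (hx : x ∈ C.level n j)
    (hx' : x ∈ C.level n j') : j = j' := by
  rw [mem_level] at hx hx'
  have lt_succ : (C.cell n j : ℝ) < C.cell n j' + 1 :=
    lt_of_mul_lt_mul_right (hx.1.trans hx'.2) (width_pos n).le
  have lt_succ' : (C.cell n j' : ℝ) < C.cell n j + 1 :=
    lt_of_mul_lt_mul_right (hx'.1.trans hx.2) (width_pos n).le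
  norm_cast at lt_succ lt_succ'
  exact cell_injOn n hj hj' (by omega)

lemma mem_level_lt (hj : j < C.height n) (hx : x ∈ C.level n j) :
    x < C.ceiling n * C.width n := by
  have cell_succ_le : (C.cell n j : ℝ) + 1 ≤ C.ceiling n := by exact_mod_cast cell_lt_ceiling hj
  exact (mem_level.1 hx).2.trans_le
    (mul_le_mul_of_nonneg_right cell_succ_le (width_pos n).le)

lemma notMem_grid_of_mem_level (hx : x ∈ C.level n j) : x ∉ C.grid n := by
  rintro ⟨z, rfl⟩
  rw [mem_level] at hx
  have lt_z := lt_of_mul_lt_mul_right hx.1 (width_pos n).le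
  have z_lt := lt_of_mul_lt_mul_right hx.2 (width_pos n).le
  norm_cast at lt_z z_lt
  omega

lemma monotone_grid : Monotone C.grid := by
  refine monotone_nat_of_le_succ fun n => ?_
  rintro _ ⟨z, rfl⟩
  exact ⟨z * C.r n, by rw [width_eq_mul_succ n]; push_cast; ring⟩

lemma exists_mem_level_succ (hj : j < C.height n) (hx : x ∈ C.level n j)
    (hg : x ∉ C.grid (n + 1)) : ∃ k < C.r n, x ∈ C.level (n + 1) (C.offset n k + j) := by
  rw [mem_level, width_eq_mul_succ n, ← mul_assoc, ← mul_assoc] at hx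
  have hw := width_pos (C := C) (n + 1)
  obtain ⟨z, z_le, lt_z⟩ : ∃ z : ℤ, z * C.width (n + 1) ≤ x ∧ x < (z + 1) * C.width (n + 1) :=
    ⟨⌊x / C.width (n + 1)⌋, (le_div_iff₀ hw).1 (Int.floor_le _),
      (div_lt_iff₀ hw).1 (Int.lt_floor_add_one _)⟩
  have z_lt : z * C.width (n + 1) < x := lt_of_le_of_ne z_le fun h => hg ⟨z, h⟩
  have lower : (C.cell n j * C.r n : ℝ) < z + 1 :=
    lt_of_mul_lt_mul_right (hx.1.trans lt_z) hw.le
  have upper : (z : ℝ) < (C.cell n j + 1) * C.r n :=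
    lt_of_mul_lt_mul_right (z_lt.trans hx.2) hw.le
  norm_cast at lower upper
  obtain ⟨k, rfl⟩ : ∃ k : ℕ, z = C.cell n j * C.r n + k :=
    ⟨(z - C.cell n j * C.r n).toNat, by push_cast at lower; omega⟩
  have hk : k < C.r n := by
    push_cast at upper
    zify
    linarith
  refine ⟨k, hk, ?_⟩
  rw [mem_level, cell_offset_add hj hk]
  exact ⟨by exact_mod_cast z_lt, by exact_mod_cast lt_z⟩

lemma add_translation_mem_level : x + C.translation n j ∈ C.level n (j + 1) ↔ x ∈ C.level n j := by
  simp only [level, translation, mem_Ioo]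
  constructor <;> rintro ⟨h₁, h₂⟩ <;> constructor <;> linarith

lemma add_translation_mem_grid (hn : n ≤ n') :
    x + C.translation n j ∈ C.grid n' ↔ x ∈ C.grid n' := by
  obtain ⟨z, hz⟩ : C.translation n j ∈ C.grid n' :=
    monotone_grid hn ⟨C.cell n (j + 1) - C.cell n j, by
      simp only [translation, left]
      push_cast
      ring⟩
  rw [← hz]
  constructor
  · rintro ⟨y, hy⟩
    exact ⟨y - z, by push_cast; linarith⟩
  · rintro ⟨y, hy⟩
    exact ⟨y + z, by push_cast; linarith⟩

lemma exists_mem_level_translation_eq (hn : n ≤ n') (hj : j + 1 < C.height n)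
    (hx : x ∈ C.level n j) (hg : x ∉ C.grid n') :
    ∃ i, i + 1 < C.height n' ∧ x ∈ C.level n' i ∧ C.translation n' i = C.translation n j := by
  induction n', hn using Nat.le_induction with
  | base => exact ⟨j, hj, hx, rfl⟩
  | succ m _ ih =>
    obtain ⟨i, hi, hxi, htr⟩ := ih fun h => hg (monotone_grid m.le_succ h)
    obtain ⟨k, hk, hxk⟩ := exists_mem_level_succ (by omega) hxi hg
    refine ⟨C.offset m k + i, offset_add_add_one_lt_height (by omega) hk, hxk, ?_⟩
    rw [← htr, translation, translation, add_assoc, left_offset_add hi hk,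
      left_offset_add (by omega) hk]
    ring

lemma translation_eq (hj : j + 1 < C.height n) (hx : x ∈ C.level n j)
    (hj' : j' + 1 < C.height n') (hx' : x ∈ C.level n' j') :
    C.translation n j = C.translation n' j' := by
  wlog hn : n ≤ n' generalizing n j n' j'
  · exact (this hj' hx' hj hx (by omega)).symm
  obtain ⟨i, hi, hxi, htr⟩ :=
    exists_mem_level_translation_eq hn hj hx (notMem_grid_of_mem_level hx')
  rw [← htr, eq_of_mem_level (by omega) (by omega) hxi hx']

lemma eq_of_add_translation_eq (hj : j + 1 < C.height n) (hx : x ∈ C.level n j)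
    (hj' : j' + 1 < C.height n') (hx' : x' ∈ C.level n' j')
    (heq : x + C.translation n j = x' + C.translation n' j') : x = x' := by
  wlog hn : n ≤ n' generalizing n j n' j' x x'
  · exact (this hj' hx' hj hx heq.symm (by omega)).symm
  have hg : x ∉ C.grid n' := by
    rw [← add_translation_mem_grid hn, heq, add_translation_mem_grid le_rfl]
    exact notMem_grid_of_mem_level hx'
  obtain ⟨i, hi, hxi, htr⟩ := exists_mem_level_translation_eq hn hj hx hg
  rw [← htr] at heq
  obtain rfl : i = j' := by
    have := eq_of_mem_level hi hj' (heq ▸ add_translation_mem_level.2 hxi)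
      (add_translation_mem_level.2 hx')
    omega
  linarith

lemma mem_space : x ∈ C.space ↔ ∃ n j, j < C.height n ∧ x ∈ C.level n j := by
  simp only [space, mem_iUnion, exists_prop]

lemma domain_subset_space : C.domain ⊆ C.space := by
  rintro x ⟨n, j, hj, hx⟩
  exact mem_space.2 ⟨n, j, by omega, hx⟩

lemma codomain_subset_space : C.codomain ⊆ C.space := by
  rintro x ⟨n, j, hj, hx⟩
  exact mem_space.2 ⟨n, j + 1, hj, hx⟩

lemma isOpen_domain : IsOpen C.domain := by
  have : C.domain = ⋃ n, ⋃ j, ⋃ (_ : j + 1 < C.height n), C.level n j := by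
    ext x
    simp only [domain, mem_ofPred_eq, mem_iUnion, exists_prop]
  rw [this]
  exact isOpen_iUnion fun n => isOpen_iUnion fun j => isOpen_iUnion fun _ => isOpen_Ioo

lemma shift_eq (hj : j + 1 < C.height n) (hx : x ∈ C.level n j) :
    C.shift x = x + C.translation n j := by
  have h : ∃ p : ℕ × ℕ, p.2 + 1 < C.height p.1 ∧ x ∈ C.level p.1 p.2 := ⟨(n, j), hj, hx⟩
  rw [shift, dif_pos h, translation_eq h.choose_spec.1 h.choose_spec.2 hj hx]

lemma bijOn_shift : BijOn C.shift C.domain C.codomain := by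
  refine ⟨?_, ?_, ?_⟩
  · rintro x ⟨n, j, hj, hx⟩
    rw [shift_eq hj hx]
    exact ⟨n, j, hj, add_translation_mem_level.2 hx⟩
  · rintro x ⟨n, j, hj, hx⟩ x' ⟨n', j', hj', hx'⟩ heq
    rw [shift_eq hj hx, shift_eq hj' hx'] at heq
    exact eq_of_add_translation_eq hj hx hj' hx' heq
  · rintro y ⟨n, j, hj, hy⟩
    have hx : y - C.translation n j ∈ C.level n j := by
      rwa [← add_translation_mem_level, sub_add_cancel]
    exact ⟨_, ⟨n, j, hj, hx⟩, by rw [shift_eq hj hx, sub_add_cancel]⟩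

lemma hasDerivAt_shift (hx : x ∈ C.domain) : HasDerivAt C.shift 1 x := by
  obtain ⟨n, j, hj, hx⟩ := hx
  refine ((hasDerivAt_id x).add_const (C.translation n j)).congr_of_eventuallyEq ?_
  filter_upwards [isOpen_Ioo.mem_nhds hx] with y hy
  exact shift_eq hj hy

lemma left_zero (n : ℕ) : C.left n 0 = 0 := by
  induction n with
  | zero => simp [left, cell]
  | succ n ih =>
    simpa [ih, offset, stackOffset] using left_offset_add (height_pos n) (r_pos (C := C) n)

lemma mem_level_zero : x ∈ C.level n 0 ↔ 0 < x ∧ x < C.width n := by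
  rw [level, left_zero, zero_add, mem_Ioo]

lemma mem_domain_of_notMem_grid (hx : x ∈ C.space) (hg : ∀ n, x ∉ C.grid n) : x ∈ C.domain := by
  obtain ⟨n, j, hj, hxj⟩ := mem_space.1 hx
  obtain ⟨k, hk, hxk⟩ := exists_mem_level_succ hj hxj (hg (n + 1))
  exact ⟨n + 1, C.offset n k + j, offset_add_add_one_lt_height hj hk, hxk⟩

lemma mem_codomain_of_notMem_grid (hx : x ∈ C.space) (hg : ∀ n, x ∉ C.grid n) :
    x ∈ C.codomain := by
  obtain ⟨n, j, hj, hxj⟩ := mem_space.1 hx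
  have mem_some_level (m : ℕ) (hm : n ≤ m) : ∃ i < C.height m, x ∈ C.level m i := by
    induction m, hm using Nat.le_induction with
    | base => exact ⟨j, hj, hxj⟩
    | succ m _ ih =>
      obtain ⟨i, hi, hxi⟩ := ih
      obtain ⟨k, hk, hxk⟩ := exists_mem_level_succ hi hxi (hg (m + 1))
      exact ⟨_, by have := offset_add_add_one_lt_height hi hk; omega, hxk⟩
  by_contra hcod
  have mem_bottom (m : ℕ) (hm : n ≤ m) : 0 < x ∧ x < C.width m := by
    obtain ⟨_ | i, hi, hxi⟩ := mem_some_level m hm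
    · exact mem_level_zero.1 hxi
    · exact absurd ⟨m, i, hi, hxi⟩ hcod
  obtain ⟨m, hwm, hm⟩ := ((tendsto_width.eventually_lt_const (mem_bottom n le_rfl).1).and
    (eventually_ge_atTop n)).exists
  exact hwm.not_gt (mem_bottom m hm).2

lemma countable_iUnion_grid : (⋃ n, C.grid n).Countable :=
  countable_iUnion fun _ => countable_range _

lemma countable_space_sdiff_domain : (C.space \ C.domain).Countable :=
  countable_iUnion_grid.mono fun x hx => by
    by_contra h
    exact hx.2 (mem_domain_of_notMem_grid hx.1 (by simpa using h))

lemma countable_space_sdiff_codomain : (C.space \ C.codomain).Countable :=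
  countable_iUnion_grid.mono fun x hx => by
    by_contra h
    exact hx.2 (mem_codomain_of_notMem_grid hx.1 (by simpa using h))

/-- The points `width (n + 1)` lie in the bottom level up to column `n` and on the grid later. -/
lemma infinite_space_sdiff_codomain : (C.space \ C.codomain).Infinite := by
  refine infinite_of_injective_forall_mem (f := fun n => C.width (n + 1))
    (strictAnti_width.injective.comp (add_left_injective 1)) fun n => ?_
  have mem_bottom (m : ℕ) (hm : m ≤ n) : C.width (n + 1) ∈ C.level m 0 :=
    mem_level_zero.2 ⟨width_pos _, strictAnti_width (by omega)⟩
  refine ⟨mem_space.2 ⟨0, 0, height_pos 0, mem_bottom 0 n.zero_le⟩, ?_⟩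
  rintro ⟨m, j, hj, hx⟩
  rcases Nat.lt_or_ge n m with hm | hm
  · exact notMem_grid_of_mem_level hx (monotone_grid hm ⟨1, by simp⟩)
  · have := eq_of_mem_level hj (height_pos m) hx (mem_bottom m hm)
    omega

lemma ceiling_mul_width_le_left_top (n : ℕ) :
    C.ceiling n * C.width n ≤ C.left (n + 1) (C.height (n + 1) - 1) := by
  have ceiling_le : C.ceiling n * C.r n ≤ C.cell (n + 1) (C.height (n + 1) - 1) := by
    rcases C.exists_offset_add_or_cell_succ_eq n (C.height (n + 1) - 1) with ⟨k, hk, j, hj, h⟩ | h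
    · have := offset_add_add_one_lt_height hj hk
      omega
    · omega
  rw [left, width_eq_mul_succ n, ← mul_assoc]
  exact mul_le_mul_of_nonneg_right (by exact_mod_cast ceiling_le) (width_pos _).le

lemma monotone_ceiling_mul_width : Monotone fun n => C.ceiling n * C.width n := by
  refine monotone_nat_of_le_succ fun n => ?_
  rw [width_eq_mul_succ n, ceiling, ← mul_assoc]
  refine mul_le_mul_of_nonneg_right ?_ (width_pos _).le
  exact_mod_cast Nat.le_add_right _ _

/-- The witnesses lie in the top level of one column, outside all earlier columns, and on the grid
of the later ones. -/
lemma infinite_space_sdiff_domain : (C.space \ C.domain).Infinite := by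
  let top (n : ℕ) : ℕ := C.height (n + 1) - 1
  have top_lt (n : ℕ) : top n < C.height (n + 1) := Nat.sub_lt (height_pos _) one_pos
  let z (n : ℕ) : ℝ := C.left (n + 1) (top n) + C.width (n + 2)
  have z_mem (n : ℕ) : z n ∈ C.level (n + 1) (top n) :=
    ⟨lt_add_of_pos_right _ (width_pos _), add_lt_add_right (strictAnti_width (by omega)) _⟩
  have lt_z (n : ℕ) : C.ceiling n * C.width n < z n :=
    (ceiling_mul_width_le_left_top n).trans_lt (z_mem n).1
  have z_mem_grid (n : ℕ) : z n ∈ C.grid (n + 2) :=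
    ⟨C.cell (n + 1) (top n) * C.r (n + 1) + 1, by
      simp only [z, left]; rw [width_eq_mul_succ (n + 1)]; push_cast; ring⟩
  have z_strictMono : StrictMono z :=
    strictMono_nat_of_lt_succ fun n => (mem_level_lt (top_lt n) (z_mem n)).trans (lt_z (n + 1))
  refine infinite_of_injective_forall_mem z_strictMono.injective fun n =>
    ⟨mem_space.2 ⟨n + 1, top n, top_lt n, z_mem n⟩, ?_⟩
  rintro ⟨m, j, hj, hx⟩
  rcases Nat.lt_trichotomy m (n + 1) with hm | rfl | hm
  · have z_lt := mem_level_lt (by omega) hx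
    exact (z_lt.trans_le (monotone_ceiling_mul_width (Nat.le_of_lt_succ hm))).not_gt (lt_z n)
  · have hj_top : j = top n := eq_of_mem_level (by omega) (top_lt n) hx (z_mem n)
    exact absurd hj (by simp only [hj_top, top]; omega)
  · exact notMem_grid_of_mem_level hx (monotone_grid hm (z_mem_grid n))

variable (C) in
lemma exists_measurableEquiv_eqOn_shift :
    ∃ T : ℝ ≃ᵐ ℝ, EqOn T C.shift C.domain ∧ BijOn T C.space C.space := by
  refine exists_measurableEquiv_extending bijOn_shift isOpen_domain.measurableSet ?_
    domain_subset_space codomain_subset_space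
    countable_space_sdiff_domain countable_space_sdiff_codomain
    infinite_space_sdiff_domain infinite_space_sdiff_codomain
  have : ContinuousOn C.shift C.domain := fun x hx =>
    (hasDerivAt_shift hx).continuousAt.continuousWithinAt
  exact this.domRestrict.measurable

lemma measurePreserving_of_eqOn_shift {T : ℝ ≃ᵐ ℝ} (hT : EqOn T C.shift C.domain) :
    MeasurePreserving T (volume.restrict C.space) (volume.restrict C.space) := by
  have ae_eq_space {D : Set ℝ} (hD : D ⊆ C.space) (hD' : (C.space \ D).Countable) :
      D =ᵐ[volume] C.space :=
    hD.eventuallyLE.antisymm (ae_le_set.2 (hD'.measure_zero volume))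
  refine measurePreserving_restrict_of_hasDerivAt_one T isOpen_domain.measurableSet
    (hT.image_eq.trans bijOn_shift.image_eq)
    (ae_eq_space domain_subset_space countable_space_sdiff_domain)
    (ae_eq_space codomain_subset_space countable_space_sdiff_codomain) fun x hx => ?_
  refine (hasDerivAt_shift hx).congr_of_eventuallyEq ?_
  filter_upwards [isOpen_domain.mem_nhds hx] with y hy using hT hy

variable (C) in
/-- The rank-one transformation with the given cutting parameters; the choice made is that of the
values on the countable set where the stacking prescribes none. -/
noncomputable def toRankOne : RankOne where
  X := C.space
  T := C.exists_measurableEquiv_eqOn_shift.choose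
  r := C.r
  s := C.s
  h := C.height
  w := C.width
  pos := C.left
  hr := C.two_le_r
  h0 := rfl
  w0 := rfl
  pos0 := left_zero 0
  hrec _ := rfl
  wrec _ := rfl
  hX := rfl
  disj _ _ hj _ hj' hne := disjoint_left.2 fun _ hx hx' => hne (eq_of_mem_level hj hj' hx hx')
  stack _ _ hj _ hk := left_offset_add hj hk
  Tmap n j hj x hx := by
    rw [C.exists_measurableEquiv_eqOn_shift.choose_spec.1 ⟨n, j, hj, hx⟩]
    exact shift_eq hj hx
  Tbij := C.exists_measurableEquiv_eqOn_shift.choose_spec.2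
  Tpres := measurePreserving_of_eqOn_shift C.exists_measurableEquiv_eqOn_shift.choose_spec.1

end CutStack

/-! ### Levels, descendants and the dynamics on a column -/

namespace RankOne

variable {S : RankOne} {n j k N : ℕ}

lemma r_pos (n : ℕ) : 0 < S.r n := two_pos.trans_le (S.hr n)

lemma w_pos (n : ℕ) : 0 < S.w n := width_pos S.hr S.w0 S.wrec n

lemma tendsto_w : Tendsto S.w atTop (nhds 0) := tendsto_width_zero S.hr S.w0 S.wrec

lemma w_eq_mul_succ (n : ℕ) : S.w n = S.r n * S.w (n + 1) := by
  have := r_pos (S := S) n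
  rw [S.wrec]
  field_simp

lemma h_succ (n : ℕ) : S.h (n + 1) = stackOffset (S.h n) (S.s n) (S.r n) := S.hrec n

lemma stackOffset_add_lt_h (hj : j < S.h n) (hk : k < S.r n) :
    stackOffset (S.h n) (S.s n) k + j < S.h (n + 1) := by
  have := stackOffset_add_add_lt (S.s n) hj hk
  rw [h_succ]
  omega

lemma h_pos (n : ℕ) : 0 < S.h n := by
  induction n with
  | zero => rw [S.h0]; exact one_pos
  | succ n ih => have := stackOffset_add_lt_h ih (r_pos n); omega

lemma lvl_succ_subset (hj : j < S.h n) (hk : k < S.r n) :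
    S.lvl (n + 1) (stackOffset (S.h n) (S.s n) k + j) ⊆ S.lvl n j := by
  have hw := w_pos (S := S) (n + 1)
  have hk' : ((k : ℝ) + 1) * S.w (n + 1) ≤ S.r n * S.w (n + 1) :=
    mul_le_mul_of_nonneg_right (by exact_mod_cast hk) hw.le
  have hk0 : 0 ≤ k * S.w (n + 1) := by positivity
  rw [lvl, lvl, stackOffset, S.stack n j hj k hk, w_eq_mul_succ n]
  exact Ioo_subset_Ioo (by linarith) (by linarith)

lemma lvl_nonempty (n j : ℕ) : (S.lvl n j).Nonempty :=
  nonempty_Ioo.2 (lt_add_of_pos_right _ (w_pos n))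

lemma eq_of_mem_lvl {x : ℝ} {j' : ℕ} (hj : j < S.h n) (hj' : j' < S.h n) (hx : x ∈ S.lvl n j)
    (hx' : x ∈ S.lvl n j') : j = j' := by
  by_contra hne
  exact disjoint_left.1 (S.disj n j hj j' hj' hne) hx hx'

lemma lvl_subset_X (hj : j < S.h n) : S.lvl n j ⊆ S.X := by
  intro x hx
  rw [S.hX]
  simp only [mem_iUnion]
  exact ⟨n, j, hj, hx⟩

lemma measurableSet_lvl (n j : ℕ) : MeasurableSet (S.lvl n j) := measurableSet_Ioo

lemma μ_lvl (hj : j < S.h n) : S.μ (S.lvl n j) = ENNReal.ofReal (S.w n) := by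
  rw [μ, Measure.restrict_apply (measurableSet_lvl n j), inter_eq_left.2 (lvl_subset_X hj), lvl,
    Real.volume_Ioo, add_sub_cancel_left]

lemma μ_lvl_zero : S.μ (S.lvl 0 0) = 1 := by
  rw [μ_lvl (h_pos 0), S.w0, ENNReal.ofReal_one]

section Descendants

lemma Hset_eq_image (n : ℕ) :
    S.Hset n = (Finset.range (S.r n)).image (stackOffset (S.h n) (S.s n)) := by
  have hr : S.r n = S.r n - 1 + 1 := by have := S.hr n; omega
  rw [hr, Finset.range_add_one', Finset.image_insert, Finset.map_eq_image, Finset.image_image]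
  rfl

lemma desc_self (j p : ℕ) : S.desc j p j = {p} := by
  cases j with
  | zero => rfl
  | succ j => rw [desc, if_pos j.lt_succ_self]

lemma desc_succ (hjN : j ≤ N) (p : ℕ) : S.desc j p (N + 1) = S.desc j p N + S.Hset N := by
  rw [desc, if_neg hjN.not_gt]

lemma desc_add_desc {i p : ℕ} (hij : i ≤ j) (hjN : j ≤ N) :
    S.desc i p j + S.desc j 0 N = S.desc i p N := by
  induction N, hjN using Nat.le_induction with
  | base => rw [desc_self, Finset.singleton_zero, add_zero]
  | succ N hjN ih => rw [desc_succ hjN, desc_succ (hij.trans hjN), ← ih, add_assoc]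

lemma add_lt_h_and_lvl_subset (hjN : j ≤ N) {a x : ℕ} (ha : a < S.h j) (hx : x ∈ S.desc j 0 N) :
    a + x < S.h N ∧ S.lvl N (a + x) ⊆ S.lvl j a := by
  induction N, hjN using Nat.le_induction generalizing x with
  | base =>
    rw [desc_self, Finset.mem_singleton] at hx
    subst hx
    exact ⟨ha, subset_rfl⟩
  | succ N hjN ih =>
    rw [desc_succ hjN, Hset_eq_image, Finset.mem_add] at hx
    obtain ⟨y, hy, z, hz, rfl⟩ := hx
    obtain ⟨k, hk, rfl⟩ := Finset.mem_image.1 hz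
    rw [Finset.mem_range] at hk
    obtain ⟨lt_h, subset⟩ := ih hy
    rw [← add_assoc, add_comm]
    exact ⟨stackOffset_add_lt_h lt_h hk, (lvl_succ_subset lt_h hk).trans subset⟩

lemma lt_h_of_mem_desc {x : ℕ} (hx : x ∈ S.desc 0 0 N) : x < S.h N := by
  simpa using (add_lt_h_and_lvl_subset N.zero_le (h_pos 0) hx).1

lemma sum_add_desc {M : Type*} [AddCommMonoid M] (hjN : j ≤ N) {P : Finset ℕ}
    (hP : ∀ a ∈ P, a < S.h j) (F : ℕ → M) :
    ∑ z ∈ P + S.desc j 0 N, F z = ∑ a ∈ P, ∑ x ∈ S.desc j 0 N, F (a + x) := by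
  rw [Finset.add_def, Finset.sum_image, Finset.sum_product]
  rintro ⟨a, x⟩ hax ⟨a', x'⟩ hax' heq
  simp only [Finset.coe_product, mem_prod, Finset.mem_coe] at hax hax' heq
  obtain ⟨z, hz⟩ := lvl_nonempty (S := S) N (a + x)
  have hza := (add_lt_h_and_lvl_subset hjN (hP a hax.1) hax.2).2 hz
  have hza' := (add_lt_h_and_lvl_subset hjN (hP a' hax'.1) hax'.2).2 (heq ▸ hz)
  obtain rfl := eq_of_mem_lvl (hP a hax.1) (hP a' hax'.1) hza hza'
  rw [Nat.add_left_cancel heq]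

lemma sum_desc_succ {M : Type*} [AddCommMonoid M] (hjN : j ≤ N) (F : ℕ → M) :
    ∑ x ∈ S.desc j 0 (N + 1), F x =
      ∑ k ∈ Finset.range (S.r N), ∑ x ∈ S.desc j 0 N, F (stackOffset (S.h N) (S.s N) k + x) := by
  have Hset_eq_desc : S.Hset N = S.desc N 0 (N + 1) := by
    rw [desc_succ le_rfl, desc_self, Finset.singleton_zero, zero_add]
  have hlt : ∀ x ∈ S.desc j 0 N, x < S.h N := fun x hx => by
    simpa using (add_lt_h_and_lvl_subset hjN (h_pos j) hx).1
  have inj : (stackOffset (S.h N) (S.s N)).Injective := fun k k' h =>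
    (stackOffset_add_inj (j := 0) (j' := 0) (h_pos N) (h_pos N) h).1
  rw [desc_succ hjN, Hset_eq_desc, sum_add_desc N.le_succ hlt, Finset.sum_comm, ← Hset_eq_desc,
    Hset_eq_image, Finset.sum_image inj.injOn]
  simp only [add_comm]

lemma card_add_desc (hjN : j ≤ N) {P : Finset ℕ} (hP : ∀ a ∈ P, a < S.h j) :
    (P + S.desc j 0 N).card = P.card * (S.desc j 0 N).card := by
  rw [Finset.card_eq_sum_ones, sum_add_desc hjN hP, Finset.sum_const, Finset.sum_const,
    smul_eq_mul, smul_eq_mul, mul_one]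

lemma card_desc_succ (hjN : j ≤ N) :
    (S.desc j 0 (N + 1)).card = S.r N * (S.desc j 0 N).card := by
  rw [Finset.card_eq_sum_ones, sum_desc_succ hjN, Finset.sum_const, Finset.sum_const,
    smul_eq_mul, smul_eq_mul, mul_one, Finset.card_range]

lemma card_desc_mul_w (hjN : j ≤ N) : (S.desc j 0 N).card * S.w N = S.w j := by
  induction N, hjN using Nat.le_induction with
  | base => rw [desc_self, Finset.card_singleton, Nat.cast_one, one_mul]
  | succ N hjN ih =>
    rw [card_desc_succ hjN, ← ih, w_eq_mul_succ N]
    push_cast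
    ring

lemma card_desc_zero_mul_w (N : ℕ) : (S.desc 0 0 N).card * S.w N = 1 := by
  rw [card_desc_mul_w N.zero_le, S.w0]

lemma card_desc_pos (hjN : j ≤ N) : (0 : ℝ) < (S.desc j 0 N).card :=
  pos_of_mul_pos_left (card_desc_mul_w hjN ▸ w_pos j) (w_pos N).le

end Descendants

section Dynamics

lemma image_lvl (hj : j + 1 < S.h n) : S.T '' S.lvl n j = S.lvl n (j + 1) := by
  have image_eq : S.T '' S.lvl n j = (· + (S.pos n (j + 1) - S.pos n j)) '' S.lvl n j :=
    image_congr (S.Tmap n j hj)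
  rw [image_eq, lvl, lvl, image_add_const_Ioo]
  congr 1 <;> ring

lemma image_iterate_lvl (hj : j + k < S.h n) : S.T^[k] '' S.lvl n j = S.lvl n (j + k) := by
  induction k with
  | zero => exact image_id _
  | succ k ih =>
    rw [Function.iterate_succ', image_comp, ih (by omega), image_lvl (j := j + k) hj, add_assoc]

lemma image_iterate_eq_preimage (k : ℕ) (E : Set ℝ) :
    S.T^[k] '' E = S.T.symm^[k] ⁻¹' E :=
  congrFun (image_eq_preimage_of_inverse (Function.LeftInverse.iterate S.T.left_inv k)
    (Function.RightInverse.iterate S.T.right_inv k)) E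

lemma measurePreserving_symm_iterate (k : ℕ) : MeasurePreserving S.T.symm^[k] S.μ S.μ :=
  (MeasurePreserving.symm S.T S.Tpres).iterate k

lemma measurableSet_image_iterate (k : ℕ) {E : Set ℝ} (hE : MeasurableSet E) :
    MeasurableSet (S.T^[k] '' E) := by
  rw [image_iterate_eq_preimage]
  exact (measurePreserving_symm_iterate k).measurable hE

lemma μ_image_iterate (k : ℕ) {E : Set ℝ} (hE : MeasurableSet E) :
    S.μ (S.T^[k] '' E) = S.μ E := by
  rw [image_iterate_eq_preimage]
  exact (measurePreserving_symm_iterate k).measure_preimage hE.nullMeasurableSet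

lemma μ_inter_image_iterate_congr {A A' B B' : Set ℝ} (hA : A =ᵐ[S.μ] A') (hB : B =ᵐ[S.μ] B')
    (k : ℕ) : S.μ (A ∩ S.T^[k] '' B) = S.μ (A' ∩ S.T^[k] '' B') := by
  rw [image_iterate_eq_preimage, image_iterate_eq_preimage]
  exact measure_congr
    (hA.inter ((measurePreserving_symm_iterate k).quasiMeasurePreserving.preimage_ae_eq hB))

end Dynamics

section LvlUnion

variable {P Q : Finset ℕ}

/-- The union of the levels of column `n` whose heights lie in `P`. -/
def lvlUnion (S : RankOne) (n : ℕ) (P : Finset ℕ) : Set ℝ := ⋃ p ∈ P, S.lvl n p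

lemma mem_lvlUnion {x : ℝ} : x ∈ S.lvlUnion n P ↔ ∃ p ∈ P, x ∈ S.lvl n p := by
  simp only [lvlUnion, mem_iUnion, exists_prop]

lemma measurableSet_lvlUnion (n : ℕ) (P : Finset ℕ) : MeasurableSet (S.lvlUnion n P) :=
  P.measurableSet_biUnion fun p _ => measurableSet_lvl n p

lemma μ_lvlUnion (hP : ∀ p ∈ P, p < S.h n) :
    S.μ (S.lvlUnion n P) = P.card * ENNReal.ofReal (S.w n) := by
  have disjoint : (P : Set ℕ).PairwiseDisjoint (S.lvl n) := fun p hp q hq hpq =>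
    S.disj n p (hP p hp) q (hP q hq) hpq
  rw [lvlUnion, measure_biUnion_finset disjoint fun p _ => measurableSet_lvl n p,
    Finset.sum_congr rfl fun p hp => μ_lvl (hP p hp), Finset.sum_const, nsmul_eq_mul]

lemma μ_real_lvlUnion (hP : ∀ p ∈ P, p < S.h n) : S.μ.real (S.lvlUnion n P) = P.card * S.w n := by
  rw [measureReal_def, μ_lvlUnion hP, ENNReal.toReal_mul, ENNReal.toReal_natCast,
    ENNReal.toReal_ofReal (w_pos n).le]

lemma lvlUnion_add_desc_ae_eq (hjN : j ≤ N) (hP : ∀ p ∈ P, p < S.h j) :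
    S.lvlUnion N (P + S.desc j 0 N) =ᵐ[S.μ] S.lvlUnion j P := by
  have hPD : ∀ z ∈ P + S.desc j 0 N, z < S.h N := fun z hz => by
    obtain ⟨p, hp, x, hx, rfl⟩ := Finset.mem_add.1 hz
    exact (add_lt_h_and_lvl_subset hjN (hP p hp) hx).1
  refine ae_eq_of_subset_of_measure_ge (fun y hy => ?_) ?_
    (measurableSet_lvlUnion _ _).nullMeasurableSet ?_
  · obtain ⟨z, hz, hyz⟩ := mem_lvlUnion.1 hy
    obtain ⟨p, hp, x, hx, rfl⟩ := Finset.mem_add.1 hz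
    exact mem_lvlUnion.2 ⟨p, hp, (add_lt_h_and_lvl_subset hjN (hP p hp) hx).2 hyz⟩
  · rw [μ_lvlUnion hP, μ_lvlUnion hPD, card_add_desc hjN hP, ← card_desc_mul_w hjN,
      ENNReal.ofReal_mul (Nat.cast_nonneg _), ENNReal.ofReal_natCast, Nat.cast_mul, mul_assoc]
  · exact μ_lvlUnion hP ▸ ENNReal.mul_ne_top (ENNReal.natCast_ne_top _) ENNReal.ofReal_ne_top

lemma lvlUnion_desc_zero_ae_eq (N : ℕ) :
    S.lvlUnion N (S.desc 0 0 N) =ᵐ[S.μ] S.lvl 0 0 := by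
  have := lvlUnion_add_desc_ae_eq (S := S) (P := {0}) N.zero_le (by simpa using h_pos 0)
  have lvlUnion_zero : S.lvlUnion 0 {0} = S.lvl 0 0 := Finset.set_biUnion_singleton 0 (S.lvl 0)
  rwa [lvlUnion_zero, Finset.singleton_zero, zero_add] at this

lemma lvlUnion_subset_lvl_zero (hP : P ⊆ S.desc 0 0 N) : S.lvlUnion N P ⊆ S.lvl 0 0 := by
  intro x hx
  obtain ⟨p, hp, hxp⟩ := mem_lvlUnion.1 hx
  exact (add_lt_h_and_lvl_subset N.zero_le (h_pos 0) (hP hp)).2 (by rwa [zero_add])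

lemma image_iterate_lvlUnion (hQ : ∀ q ∈ Q, q + k < S.h n) :
    S.T^[k] '' S.lvlUnion n Q = S.lvlUnion n (Q.image (· + k)) := by
  rw [lvlUnion, image_iUnion₂, lvlUnion, Finset.set_biUnion_finset_image]
  exact iUnion₂_congr fun q hq => image_iterate_lvl (hQ q hq)

lemma lvlUnion_inter (hP : ∀ p ∈ P, p < S.h n) (hQ : ∀ q ∈ Q, q < S.h n) :
    S.lvlUnion n P ∩ S.lvlUnion n Q = S.lvlUnion n (P ∩ Q) := by
  ext x
  simp only [mem_inter_iff, mem_lvlUnion, Finset.mem_inter]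
  constructor
  · rintro ⟨⟨p, hp, hxp⟩, q, hq, hxq⟩
    obtain rfl := eq_of_mem_lvl (hP p hp) (hQ q hq) hxp hxq
    exact ⟨p, ⟨hp, hq⟩, hxp⟩
  · rintro ⟨p, ⟨hp, hq⟩, hxp⟩
    exact ⟨⟨p, hp, hxp⟩, p, hq, hxp⟩

lemma μ_real_lvlUnion_inter_image (hP : ∀ p ∈ P, p < S.h n) (hQ : ∀ q ∈ Q, q + k < S.h n) :
    S.μ.real (S.lvlUnion n P ∩ S.T^[k] '' S.lvlUnion n Q) =
      ∑ p ∈ P, ∑ q ∈ Q, if p = q + k then S.w n else 0 := by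
  have hQk : ∀ z ∈ Q.image (· + k), z < S.h n := by simpa using hQ
  rw [image_iterate_lvlUnion hQ, lvlUnion_inter hP hQk,
    μ_real_lvlUnion fun p hp => hP p (Finset.mem_of_mem_inter_left hp),
    ← Finset.filter_mem_eq_inter, Finset.card_filter, Nat.cast_sum, Finset.sum_mul]
  refine Finset.sum_congr rfl fun p _ => ?_
  rw [← Finset.sum_image (f := fun z => if p = z then S.w n else 0) (g := (· + k))
    (add_left_injective k).injOn, Finset.sum_ite_eq]
  split_ifs <;> simp

end LvlUnion

end RankOne

/-! ### Finite sets with almost shift-invariant differences -/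

section Differences

lemma abs_sum_le_of_subset {ι : Type*} {s t : Finset ι} {F : ι → ℝ} {V W : ℝ}
    (hts : t ⊆ s) (hV : ∀ i ∈ s, |F i| ≤ V) (hW : |∑ i ∈ t, F i| ≤ W) :
    |∑ i ∈ s, F i| ≤ (s.card - t.card) * V + W := by
  classical
  have hsdiff : |∑ i ∈ s \ t, F i| ≤ (s \ t).card * V := by
    rw [← nsmul_eq_mul]
    exact (Finset.abs_sum_le_sum_abs _ _).trans
      (Finset.sum_le_card_nsmul _ _ _ fun i hi => hV i (Finset.sdiff_subset hi))
  rw [Finset.card_sdiff_of_subset hts, Nat.cast_sub (Finset.card_le_card hts)] at hsdiff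
  rw [← Finset.sum_sdiff hts]
  exact (abs_add_le _ _).trans (add_le_add hsdiff hW)

lemma abs_sub_le_of_abs_succ_sub_le {f : ℤ → ℝ} {K : ℝ} (hf : ∀ z, |f (z + 1) - f z| ≤ K) (z : ℤ) :
    |f z - f 0| ≤ |(z : ℝ)| * K := by
  have nat_step (n : ℕ) (z : ℤ) : |f (z + n) - f z| ≤ n * K := by
    induction n with
    | zero => simp
    | succ n ih =>
      have step := abs_sub_le (f (z + n + 1)) (f (z + n)) (f z)
      push_cast
      rw [← add_assoc]
      linarith [hf (z + n)]
  rw [← Int.cast_abs, Int.abs_eq_natAbs, Int.cast_natCast]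
  rcases Int.natAbs_eq z with hz | hz
  · have := nat_step z.natAbs 0
    rwa [zero_add, ← hz] at this
  · have := nat_step z.natAbs z
    rwa [show z + z.natAbs = 0 by omega, abs_sub_comm] at this

variable {D : Finset ℕ} {v : ℝ} {σ : ℤ → ℝ}

/-- The sum of `σ` over the translates `z + (x - y)` of the differences of `D`, with
multiplicity. -/
def diffSum (D : Finset ℕ) (σ : ℤ → ℝ) (z : ℤ) : ℝ := ∑ x ∈ D, ∑ y ∈ D, σ (z + (x - y))

/-- Shifting the distribution of the differences of `D` by one changes it by at most `v` in total
variation. The total variation is expressed by duality, through test functions `σ`. -/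
def DiffShiftVarLE (D : Finset ℕ) (v : ℝ) : Prop :=
  ∀ σ : ℤ → ℝ, (∀ z, |σ z| ≤ 1) → |diffSum D σ 1 - diffSum D σ 0| ≤ v * (D.card : ℝ) ^ 2

lemma abs_diffSum_le (hσ : ∀ z, |σ z| ≤ 1) (z : ℤ) : |diffSum D σ z| ≤ (D.card : ℝ) ^ 2 :=
  calc |diffSum D σ z| ≤ ∑ x ∈ D, ∑ y ∈ D, |σ (z + (x - y))| :=
        (Finset.abs_sum_le_sum_abs _ _).trans
          (Finset.sum_le_sum fun _ _ => Finset.abs_sum_le_sum_abs _ _)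
    _ ≤ ∑ _x ∈ D, ∑ _y ∈ D, (1 : ℝ) :=
        Finset.sum_le_sum fun _ _ => Finset.sum_le_sum fun _ _ => hσ _
    _ = (D.card : ℝ) ^ 2 := by simp [sq]

lemma diffSum_of_copies {D' : Finset ℕ} {b : ℕ → ℕ} {r : ℕ}
    (hD' : ∀ F : ℕ → ℝ, ∑ x ∈ D', F x = ∑ k ∈ Finset.range r, ∑ x ∈ D, F (b k + x)) (z : ℤ) :
    diffSum D' σ z = ∑ k ∈ Finset.range r, ∑ l ∈ Finset.range r, diffSum D σ (z + (b k - b l)) := by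
  simp only [diffSum, hD']
  refine Finset.sum_congr rfl fun k _ => Finset.sum_comm.trans ?_
  refine Finset.sum_congr rfl fun l _ => Finset.sum_congr rfl fun x _ =>
    Finset.sum_congr rfl fun y _ => congrArg σ ?_
  push_cast
  ring

/-- The gaps `c, c + 1, …` between consecutive terms of `b` make the sum telescope. -/
lemma abs_sum_increment_le {f : ℤ → ℝ} {K : ℝ} (hf : ∀ z, |f z| ≤ K) {b : ℕ → ℕ} {c r : ℕ}
    (hb : ∀ k < r, b (k + 1) = b k + (c + k)) :
    |∑ k ∈ Finset.range r, (f (b (k + 1) - b k + 1) - f (b (k + 1) - b k))| ≤ 2 * K := by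
  have gap : ∀ k ∈ Finset.range r, f (b (k + 1) - b k + 1) - f (b (k + 1) - b k) =
      f (c + (k + 1 : ℕ)) - f (c + k) := fun k hk => by
    rw [hb k (Finset.mem_range.1 hk)]
    congr 2 <;> push_cast <;> ring
  rw [Finset.sum_congr rfl gap, Finset.sum_range_sub fun k : ℕ => f (c + k)]
  have := abs_sub (f (c + r)) (f (c + (0 : ℕ)))
  linarith [hf (c + r), hf (c + (0 : ℕ))]

lemma diffShiftVarLE_two (D : Finset ℕ) : DiffShiftVarLE D 2 := fun σ hσ => by
  have := abs_sub (diffSum D σ 1) (diffSum D σ 0)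
  linarith [abs_diffSum_le (D := D) hσ 0, abs_diffSum_le (D := D) hσ 1]

namespace DiffShiftVarLE

lemma mono {v' : ℝ} (h : DiffShiftVarLE D v) (hv : v ≤ v') : DiffShiftVarLE D v' := fun σ hσ =>
  (h σ hσ).trans (by gcongr)

lemma bound_nonneg (h : DiffShiftVarLE D v) : 0 ≤ v * (D.card : ℝ) ^ 2 :=
  (abs_nonneg _).trans (h 0 (by simp))

lemma abs_diffSum_add_one_sub_le (h : DiffShiftVarLE D v) (hσ : ∀ z, |σ z| ≤ 1) (z : ℤ) :
    |diffSum D σ (z + 1) - diffSum D σ z| ≤ v * (D.card : ℝ) ^ 2 := by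
  simpa only [diffSum, zero_add, add_assoc] using h (fun t => σ (z + t)) fun t => hσ (z + t)

lemma abs_sum_diffSum_sub_le (h : DiffShiftVarLE D v) (hσ : ∀ z, |σ z| ≤ 1) {P Q : Finset ℕ}
    {H : ℕ} (hP : ∀ a ∈ P, a < H) (hQ : ∀ b ∈ Q, b < H) :
    |∑ a ∈ P, ∑ b ∈ Q, diffSum D σ (a - b) - P.card * Q.card * diffSum D σ 0| ≤
      P.card * Q.card * (H * (v * (D.card : ℝ) ^ 2)) := by
  have deviation : ∀ a ∈ P, ∀ b ∈ Q,
      |diffSum D σ (a - b) - diffSum D σ 0| ≤ H * (v * (D.card : ℝ) ^ 2) := fun a ha b hb => by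
    have abs_le : |(a - b : ℤ)| ≤ H := by
      have := hP a ha
      have := hQ b hb
      rw [abs_le]
      omega
    refine (abs_sub_le_of_abs_succ_sub_le (h.abs_diffSum_add_one_sub_le hσ) _).trans
      (mul_le_mul_of_nonneg_right ?_ h.bound_nonneg)
    exact_mod_cast abs_le
  calc |∑ a ∈ P, ∑ b ∈ Q, diffSum D σ (a - b) - P.card * Q.card * diffSum D σ 0|
      = |∑ a ∈ P, ∑ b ∈ Q, (diffSum D σ (a - b) - diffSum D σ 0)| := by
        simp only [Finset.sum_sub_distrib, Finset.sum_const, nsmul_eq_mul, mul_assoc]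
    _ ≤ ∑ a ∈ P, ∑ b ∈ Q, |diffSum D σ (a - b) - diffSum D σ 0| :=
        (Finset.abs_sum_le_sum_abs _ _).trans
          (Finset.sum_le_sum fun _ _ => Finset.abs_sum_le_sum_abs _ _)
    _ ≤ ∑ _a ∈ P, ∑ _b ∈ Q, H * (v * (D.card : ℝ) ^ 2) :=
        Finset.sum_le_sum fun a ha => Finset.sum_le_sum fun b hb => deviation a ha b hb
    _ = P.card * Q.card * (H * (v * (D.card : ℝ) ^ 2)) := by
        simp only [Finset.sum_const, nsmul_eq_mul, mul_assoc]

lemma of_staircase (h : DiffShiftVarLE D v) {D' : Finset ℕ} {b : ℕ → ℕ} {c r : ℕ}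
    (hD' : ∀ F : ℕ → ℝ, ∑ x ∈ D', F x = ∑ k ∈ Finset.range (r + 1), ∑ x ∈ D, F (b k + x))
    (hb : ∀ k < r, b (k + 1) = b k + (c + k)) :
    DiffShiftVarLE D' ((1 - r / (r + 1 : ℝ) ^ 2) * v + 2 / (r + 1 : ℝ) ^ 2) := by
  intro σ hσ
  let increment (p : ℕ × ℕ) : ℝ :=
    diffSum D σ (b p.1 - b p.2 + 1) - diffSum D σ (b p.1 - b p.2)
  have card_D' : (D'.card : ℝ) = (r + 1) * D.card := by simpa using hD' fun _ => 1
  have diffSum_sub : diffSum D' σ 1 - diffSum D' σ 0 =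
      ∑ p ∈ Finset.range (r + 1) ×ˢ Finset.range (r + 1), increment p := by
    simp only [diffSum_of_copies hD', increment, ← Finset.sum_product', ← Finset.sum_sub_distrib,
      zero_add, add_comm (1 : ℤ)]
  have inj : Function.Injective fun k : ℕ => (k + 1, k) := fun k k' hk => (Prod.ext_iff.1 hk).2
  have subset : (Finset.range r).image (fun k => (k + 1, k)) ⊆
      Finset.range (r + 1) ×ˢ Finset.range (r + 1) :=
    Finset.image_subset_iff.2 fun k hk => by
      simp only [Finset.mem_product, Finset.mem_range] at hk ⊢
      omega
  have consecutive :
      |∑ p ∈ (Finset.range r).image (fun k => (k + 1, k)), increment p| ≤ 2 * (D.card : ℝ) ^ 2 := by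
    rw [Finset.sum_image inj.injOn]
    exact abs_sum_increment_le (abs_diffSum_le hσ) hb
  refine diffSum_sub ▸ (abs_sum_le_of_subset subset
    (fun p _ => h.abs_diffSum_add_one_sub_le hσ _) consecutive).trans_eq ?_
  rw [Finset.card_product, Finset.card_image_of_injective _ inj, Finset.card_range,
    Finset.card_range, card_D']
  push_cast
  field_simp

end DiffShiftVarLE

end Differences

/-! ### Correlations of unions of levels -/

section Duality

lemma sum_abs_le_of_forall_abs_le_one {f : ℕ → ℝ} {m : ℕ} {K : ℝ}
    (h : ∀ σ : ℤ → ℝ, (∀ z, |σ z| ≤ 1) → (∀ z ∉ Ico 0 (m : ℤ), σ z = 0) →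
      ∑ k ∈ Finset.range m, σ k * f k ≤ K) :
    ∑ k ∈ Finset.range m, |f k| ≤ K := by
  let σ : ℤ → ℝ := (Ico 0 (m : ℤ)).indicator fun z => (SignType.sign (f z.toNat) : ℝ)
  refine (Finset.sum_congr rfl fun k hk => ?_).trans_le
    (h σ (fun z => ?_) fun z hz => indicator_of_notMem hz _)
  · have hk : (k : ℤ) ∈ Ico 0 (m : ℤ) := by simpa using hk
    have σ_k : σ k = SignType.sign (f k) := indicator_of_mem hk _
    rw [σ_k, sign_mul_self]
  · have norm_le : ‖σ z‖ ≤ ‖(SignType.sign (f z.toNat) : ℝ)‖ := norm_indicator_le_norm_self _ _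
    refine norm_le.trans ?_
    rcases SignType.sign (f z.toNat) with _ | _ | _ <;> norm_num

end Duality

namespace RankOne

variable {S : RankOne} {j m N : ℕ} {P Q : Finset ℕ} {σ : ℤ → ℝ}

lemma u_lvl_zero (k : ℕ) : S.u (S.lvl 0 0) k = S.μ.real (S.lvl 0 0 ∩ S.T^[k] '' S.lvl 0 0) := by
  rw [u, μ_lvl_zero, ENNReal.toReal_one, one_pow, div_one, measureReal_def]

lemma u_lvl_zero_nonneg (k : ℕ) : 0 ≤ S.u (S.lvl 0 0) k :=
  u_lvl_zero (S := S) k ▸ measureReal_nonneg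

lemma u_lvl_zero_eq_desc (j k : ℕ) : S.u (S.lvl 0 0) k =
    S.μ.real (S.lvlUnion j (S.desc 0 0 j) ∩ S.T^[k] '' S.lvlUnion j (S.desc 0 0 j)) := by
  rw [u_lvl_zero, measureReal_def, measureReal_def,
    μ_inter_image_iterate_congr (lvlUnion_desc_zero_ae_eq j) (lvlUnion_desc_zero_ae_eq j)]

lemma sum_mul_μ_real_lvlUnion_inter (hP : ∀ p ∈ P, p < S.h N) (hQ : ∀ q ∈ Q, q + m ≤ S.h N)
    (hσ : ∀ z ∉ Ico 0 (m : ℤ), σ z = 0) :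
    ∑ k ∈ Finset.range m, σ k * S.μ.real (S.lvlUnion N P ∩ S.T^[k] '' S.lvlUnion N Q) =
      S.w N * ∑ p ∈ P, ∑ q ∈ Q, σ (p - q) := by
  have single (p q : ℕ) :
      ∑ k ∈ Finset.range m, σ k * (if p = q + k then S.w N else 0) = S.w N * σ (p - q) := by
    rw [Finset.sum_eq_single (p - q)]
    · by_cases hqp : q ≤ p
      · rw [if_pos (by omega), Nat.cast_sub hqp, mul_comm]
      · rw [if_neg (by omega), hσ (p - q) fun h => hqp (by have := h.1; omega), mul_zero,
          mul_zero]
    · intro k _ hk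
      rw [if_neg (by omega), mul_zero]
    · intro hk
      rw [Finset.mem_range] at hk
      rw [hσ _ fun h => hk (by have := h.2; omega), zero_mul]
  have expand : ∀ k ∈ Finset.range m,
      σ k * S.μ.real (S.lvlUnion N P ∩ S.T^[k] '' S.lvlUnion N Q) =
        ∑ p ∈ P, ∑ q ∈ Q, σ k * (if p = q + k then S.w N else 0) := fun k hk => by
    have hQk : ∀ q ∈ Q, q + k < S.h N := fun q hq => by
      have := hQ q hq
      have := Finset.mem_range.1 hk
      omega
    simp only [μ_real_lvlUnion_inter_image hP hQk, Finset.mul_sum]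
  rw [Finset.sum_congr rfl expand, Finset.sum_comm, Finset.mul_sum]
  refine Finset.sum_congr rfl fun p _ => ?_
  rw [Finset.sum_comm, Finset.mul_sum]
  exact Finset.sum_congr rfl fun q _ => single p q

lemma add_le_h_of_mem_desc (hM : S.M N < m) (hm : 2 * m ≤ S.h N) {x : ℕ} (hx : x ∈ S.desc 0 0 N) :
    x + m ≤ S.h N := by
  have : x ≤ S.M N := Finset.le_sup (f := id) hx
  omega

/-- Both unions are refined to unions of levels of the column `N`, whose levels through `I` stay
in the column for `m` steps. -/
lemma sum_mul_μ_real_lvlUnion_inter_eq_diffSum (hM : S.M N < m) (hm : 2 * m ≤ S.h N) (hjN : j ≤ N)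
    (hP : P ⊆ S.desc 0 0 j) (hQ : Q ⊆ S.desc 0 0 j) (hσ : ∀ z ∉ Ico 0 (m : ℤ), σ z = 0) :
    ∑ k ∈ Finset.range m, σ k * S.μ.real (S.lvlUnion j P ∩ S.T^[k] '' S.lvlUnion j Q) =
      S.w N * ∑ a ∈ P, ∑ b ∈ Q, diffSum (S.desc j 0 N) σ (a - b) := by
  have hP' : ∀ a ∈ P, a < S.h j := fun a ha => lt_h_of_mem_desc (hP ha)
  have hQ' : ∀ b ∈ Q, b < S.h j := fun b hb => lt_h_of_mem_desc (hQ hb)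
  have mem_desc {R : Finset ℕ} (hR : R ⊆ S.desc 0 0 j) : R + S.desc j 0 N ⊆ S.desc 0 0 N :=
    desc_add_desc (S := S) j.zero_le hjN ▸ Finset.add_subset_add_right hR
  have refined (k : ℕ) : S.μ.real (S.lvlUnion j P ∩ S.T^[k] '' S.lvlUnion j Q) =
      S.μ.real (S.lvlUnion N (P + S.desc j 0 N) ∩
        S.T^[k] '' S.lvlUnion N (Q + S.desc j 0 N)) :=
    congrArg ENNReal.toReal (μ_inter_image_iterate_congr (lvlUnion_add_desc_ae_eq hjN hP').symm
      (lvlUnion_add_desc_ae_eq hjN hQ').symm k)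
  simp only [refined]
  rw [sum_mul_μ_real_lvlUnion_inter (fun p hp => lt_h_of_mem_desc (mem_desc hP hp))
    (fun q hq => add_le_h_of_mem_desc hM hm (mem_desc hQ hq)) hσ, sum_add_desc hjN hP']
  congr 1
  refine Finset.sum_congr rfl fun a _ => ?_
  simp only [sum_add_desc hjN hQ', diffSum]
  rw [Finset.sum_comm]
  refine Finset.sum_congr rfl fun b _ => Finset.sum_congr rfl fun x _ =>
    Finset.sum_congr rfl fun y _ => congrArg σ ?_
  push_cast
  ring

/-- Among the pairs `(p, q)` of descendants of `I`, at least half satisfy `q ≤ p`. -/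
lemma card_desc_le_two_mul_a (hM : S.M N < m) (hm : 2 * m ≤ S.h N) :
    (S.desc 0 0 N).card ≤ 2 * S.a (S.lvl 0 0) m := by
  set D := S.desc 0 0 N
  let g : ℤ → ℝ := (Ico 0 (m : ℤ)).indicator 1
  have a_eq : S.a (S.lvl 0 0) m = S.w N * ∑ p ∈ D, ∑ q ∈ D, g (p - q) := by
    rw [← sum_mul_μ_real_lvlUnion_inter (fun p hp => lt_h_of_mem_desc hp)
      (fun q hq => add_le_h_of_mem_desc hM hm hq) fun z hz => indicator_of_notMem hz _]
    refine Finset.sum_congr rfl fun k hk => ?_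
    have hk : (k : ℤ) ∈ Ico 0 (m : ℤ) := by simpa using hk
    rw [u_lvl_zero_eq_desc N, indicator_of_mem hk, Pi.one_apply, one_mul]
  have one_le : ∀ p ∈ D, ∀ q ∈ D, 1 ≤ g (p - q) + g (q - p) := fun p hp q hq => by
    have hp : p ≤ S.M N := Finset.le_sup (f := id) hp
    have hq : q ≤ S.M N := Finset.le_sup (f := id) hq
    simp only [g, indicator, mem_Ico, Pi.one_apply]
    split_ifs <;> first | omega | norm_num
  have card_sq_le : (D.card : ℝ) * D.card ≤ 2 * ∑ p ∈ D, ∑ q ∈ D, g (p - q) :=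
    calc (D.card : ℝ) * D.card = ∑ _p ∈ D, ∑ _q ∈ D, (1 : ℝ) := by simp
      _ ≤ ∑ p ∈ D, ∑ q ∈ D, (g (p - q) + g (q - p)) :=
          Finset.sum_le_sum fun p hp => Finset.sum_le_sum fun q hq => one_le p hp q hq
      _ = 2 * ∑ p ∈ D, ∑ q ∈ D, g (p - q) := by
          simp only [Finset.sum_add_distrib]
          rw [Finset.sum_comm (f := fun p q : ℕ => g (q - p)), two_mul]
  calc (D.card : ℝ) = S.w N * (D.card * D.card) := by
        rw [← mul_assoc, mul_comm (S.w N), card_desc_zero_mul_w, one_mul]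
    _ ≤ S.w N * (2 * ∑ p ∈ D, ∑ q ∈ D, g (p - q)) :=
        mul_le_mul_of_nonneg_left card_sq_le (w_pos N).le
    _ = 2 * S.a (S.lvl 0 0) m := by rw [a_eq, mul_left_comm]

lemma sub_mul_le_of_abs_sub_le {p q d w x y ψ K : ℝ} (hp : 0 ≤ p) (hq : 0 ≤ q) (hw : 0 ≤ w)
    (hdw : d * w = 1) (hx : |x - p * q * ψ| ≤ p * q * K) (hy : |y - d * d * ψ| ≤ d * d * K) :
    x - p * w * (q * w) * y ≤ 2 * (p * q * K) := by
  have lower : p * w * (q * w) * (d * d * (ψ - K)) ≤ p * w * (q * w) * y :=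
    mul_le_mul_of_nonneg_left (by linarith [(abs_le.1 hy).1]) (by positivity)
  have cancel : p * w * (q * w) * (d * d * (ψ - K)) = p * q * (ψ - K) :=
    calc _ = p * q * (d * w * (d * w)) * (ψ - K) := by ring
      _ = _ := by rw [hdw]; ring
  linarith [(abs_le.1 hx).2]

/-- The `k`-th term, without absolute value, of the sums in the definition of rational weak mixing
on the unit interval: the deviation of `μ(A ∩ T^k B)` from `μ(A) μ(B) u_k(I)`. -/
noncomputable def corrDefect (S : RankOne) (A B : Set ℝ) (k : ℕ) : ℝ :=
  S.μ.real (A ∩ S.T^[k] '' B) - S.μ.real A * S.μ.real B * S.u (S.lvl 0 0) k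

lemma sum_mul_corrDefect_lvlUnion_eq (hM : S.M N < m) (hm : 2 * m ≤ S.h N) (hjN : j ≤ N)
    (hP : P ⊆ S.desc 0 0 j) (hQ : Q ⊆ S.desc 0 0 j) (hσ : ∀ z ∉ Ico 0 (m : ℤ), σ z = 0) :
    ∑ k ∈ Finset.range m, σ k * S.corrDefect (S.lvlUnion j P) (S.lvlUnion j Q) k =
      S.w N * (∑ a ∈ P, ∑ b ∈ Q, diffSum (S.desc j 0 N) σ (a - b) -
        P.card * S.w j * (Q.card * S.w j) *
          ∑ a ∈ S.desc 0 0 j, ∑ b ∈ S.desc 0 0 j, diffSum (S.desc j 0 N) σ (a - b)) := by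
  rw [mul_sub, mul_left_comm (S.w N),
    ← sum_mul_μ_real_lvlUnion_inter_eq_diffSum hM hm hjN hP hQ hσ,
    ← sum_mul_μ_real_lvlUnion_inter_eq_diffSum hM hm hjN subset_rfl subset_rfl hσ,
    Finset.mul_sum, ← Finset.sum_sub_distrib]
  refine Finset.sum_congr rfl fun k _ => ?_
  rw [corrDefect, μ_real_lvlUnion fun a ha => lt_h_of_mem_desc (hP ha),
    μ_real_lvlUnion fun b hb => lt_h_of_mem_desc (hQ hb), u_lvl_zero_eq_desc j k]
  ring

/-- Smoothing by the descendants of the column `j` makes both correlations comparable to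
`w N * |P| * |Q| * diffSum 0`, independently of the positions of the levels. -/
lemma sum_abs_corrDefect_lvlUnion_le (hM : S.M N < m) (hm : 2 * m ≤ S.h N) (hjN : j ≤ N) {v : ℝ}
    (hv : DiffShiftVarLE (S.desc j 0 N) v) (hP : P ⊆ S.desc 0 0 j) (hQ : Q ⊆ S.desc 0 0 j) :
    ∑ k ∈ Finset.range m, |S.corrDefect (S.lvlUnion j P) (S.lvlUnion j Q) k| ≤
      2 * (S.h j * v * (S.desc 0 0 N).card) := by
  refine sum_abs_le_of_forall_abs_le_one fun σ hσ hσm => ?_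
  have lt_h {R : Finset ℕ} (hR : R ⊆ S.desc 0 0 j) : ∀ a ∈ R, a < S.h j := fun a ha =>
    lt_h_of_mem_desc (hR ha)
  set D := S.desc 0 0 j
  set R := S.desc j 0 N
  have card_D_mul : ((S.desc 0 0 N).card : ℝ) = D.card * R.card := by
    rw [← desc_add_desc j.zero_le hjN, card_add_desc hjN (lt_h subset_rfl), Nat.cast_mul]
  have card_mul_le : (P.card : ℝ) * Q.card ≤ D.card * D.card := by
    gcongr
  have hK : 0 ≤ S.h j * (v * (R.card : ℝ) ^ 2) := mul_nonneg (Nat.cast_nonneg _) hv.bound_nonneg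
  calc _ ≤ S.w N * (2 * (P.card * Q.card * (S.h j * (v * (R.card : ℝ) ^ 2)))) := by
        rw [sum_mul_corrDefect_lvlUnion_eq hM hm hjN hP hQ hσm]
        exact mul_le_mul_of_nonneg_left (sub_mul_le_of_abs_sub_le (Nat.cast_nonneg _)
          (Nat.cast_nonneg _) (w_pos j).le (card_desc_zero_mul_w j)
          (hv.abs_sum_diffSum_sub_le hσ (lt_h hP) (lt_h hQ))
          (hv.abs_sum_diffSum_sub_le hσ (lt_h subset_rfl) (lt_h subset_rfl))) (w_pos N).le
    _ ≤ S.w N * (2 * (D.card * D.card * (S.h j * (v * (R.card : ℝ) ^ 2)))) := by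
        have := w_pos (S := S) N
        gcongr
    _ = 2 * (S.h j * v * (S.desc 0 0 N).card) * ((S.desc 0 0 N).card * S.w N) := by
        rw [card_D_mul]
        ring
    _ = _ := by rw [card_desc_zero_mul_w, mul_one]

end RankOne

/-! ### Approximation of measurable sets by unions of levels -/

section Approximation

lemma eventually_volume_cthickening_sdiff_lt {K : Set ℝ} (hK : IsCompact K) {w : ℕ → ℝ}
    (hw : Tendsto w atTop (nhds 0)) {ε : ENNReal} (hε : ε ≠ 0) :
    ∀ᶠ n in atTop, volume (Metric.cthickening (w n) K \ K) < ε := by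
  have lim := (tendsto_measure_cthickening_of_isCompact (μ := volume) hK).comp hw
  filter_upwards [lim.eventually_lt_const (ENNReal.lt_add_right hK.measure_ne_top hε)] with n hn
  rw [measure_sdiff (Metric.self_subset_cthickening K) hK.measurableSet.nullMeasurableSet
    hK.measure_ne_top]
  exact ENNReal.sub_lt_of_lt_add (measure_mono (Metric.self_subset_cthickening K))
    (by rwa [add_comm])

end Approximation

namespace RankOne

variable {S : RankOne} {A E : Set ℝ} {m n N : ℕ} {P : Finset ℕ}

lemma μ_ne_top (hE : E ⊆ S.lvl 0 0) : S.μ E ≠ ⊤ :=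
  measure_ne_top_of_subset hE (by rw [μ_lvl_zero]; exact ENNReal.one_ne_top)

lemma μ_real_le_one (hE : E ⊆ S.lvl 0 0) : S.μ.real E ≤ 1 :=
  (measureReal_mono hE (μ_ne_top subset_rfl)).trans_eq (by rw [measureReal_def, μ_lvl_zero]; rfl)

open Classical in
lemma eventually_exists_lvlUnion_symmDiff_le (hA : MeasurableSet A) (hAI : A ⊆ S.lvl 0 0) {ε : ℝ}
    (hε : 0 < ε) :
    ∀ᶠ j in atTop, ∃ P ⊆ S.desc 0 0 j, S.μ.real (symmDiff A (S.lvlUnion j P)) ≤ ε := by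
  have hε' : ENNReal.ofReal (ε / 2) ≠ 0 := by simpa using hε
  have volume_ne_top : volume A ≠ ⊤ :=
    measure_ne_top_of_subset hAI (by simp [lvl])
  obtain ⟨K, hKA, hK, hAK⟩ := hA.exists_isCompact_sdiff_lt volume_ne_top hε'
  filter_upwards [eventually_volume_cthickening_sdiff_lt hK tendsto_w hε'] with j hj
  let P := (S.desc 0 0 j).filter fun a => (S.lvl j a ∩ K).Nonempty
  have lvlUnion_subset : S.lvlUnion j P ⊆ Metric.cthickening (S.w j) K := fun x hx => by
    obtain ⟨a, ha, hxa⟩ := mem_lvlUnion.1 hx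
    obtain ⟨y, hya, hyK⟩ := (Finset.mem_filter.1 ha).2
    refine Metric.mem_cthickening_of_dist_le x y _ _ hyK ?_
    rw [lvl, mem_Ioo] at hxa hya
    rw [Real.dist_eq, abs_le]
    constructor <;> linarith
  have symmDiff_subset : symmDiff A (S.lvlUnion j P) ⊆
      (A \ K ∪ Metric.cthickening (S.w j) K \ K) ∪
        (S.lvl 0 0 \ S.lvlUnion j (S.desc 0 0 j)) := by
    rintro x (⟨hxA, hxP⟩ | ⟨hxP, hxA⟩)
    · by_cases hxK : x ∈ K
      · refine Or.inr ⟨hAI hxA, fun hxD => hxP ?_⟩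
        obtain ⟨a, ha, hxa⟩ := mem_lvlUnion.1 hxD
        exact mem_lvlUnion.2 ⟨a, Finset.mem_filter.2 ⟨ha, x, hxa, hxK⟩, hxa⟩
      · exact Or.inl (Or.inl ⟨hxA, hxK⟩)
    · exact Or.inl (Or.inr ⟨lvlUnion_subset hxP, fun hxK => hxA (hKA hxK)⟩)
  refine ⟨P, Finset.filter_subset _ _, ENNReal.toReal_le_of_le_ofReal hε.le ?_⟩
  calc S.μ (symmDiff A (S.lvlUnion j P))
      ≤ S.μ (A \ K) + S.μ (Metric.cthickening (S.w j) K \ K) +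
          S.μ (S.lvl 0 0 \ S.lvlUnion j (S.desc 0 0 j)) :=
        (measure_mono symmDiff_subset).trans ((measure_union_le _ _).trans
          (add_le_add_left (measure_union_le _ _) _))
    _ ≤ ENNReal.ofReal (ε / 2) + ENNReal.ofReal (ε / 2) + 0 := by
        refine add_le_add (add_le_add ?_ ?_)
          (ae_le_set.1 (lvlUnion_desc_zero_ae_eq j).symm.le).le
        exacts [(Measure.restrict_apply_le _ _).trans hAK.le,
          (Measure.restrict_apply_le _ _).trans hj.le]
    _ = ENNReal.ofReal ε := by
        rw [add_zero, ← ENNReal.ofReal_add (by positivity) (by positivity), add_halves]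

open Classical in
lemma card_filter_mem_image_iterate_le (hP : ∀ p ∈ P, p + m ≤ S.h n) (x : ℝ) :
    ((Finset.range m).filter fun k => x ∈ S.T^[k] '' S.lvlUnion n P).card ≤ P.card := by
  have exists_source : ∀ k ∈ (Finset.range m).filter (fun k => x ∈ S.T^[k] '' S.lvlUnion n P),
      ∃ p ∈ P, p + k < S.h n ∧ x ∈ S.lvl n (p + k) := fun k hk => by
    obtain ⟨hkm, y, hy, rfl⟩ := Finset.mem_filter.1 hk
    obtain ⟨p, hp, hyp⟩ := mem_lvlUnion.1 hy
    have lt_h : p + k < S.h n := by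
      have := hP p hp
      have := Finset.mem_range.1 hkm
      omega
    exact ⟨p, hp, lt_h, image_iterate_lvl lt_h ▸ mem_image_of_mem _ hyp⟩
  choose! source source_mem source_lt mem_lvl using exists_source
  refine Finset.card_le_card_of_injOn source source_mem fun k hk k' hk' heq => ?_
  have := eq_of_mem_lvl (source_lt k hk) (source_lt k' hk') (mem_lvl k hk) (mem_lvl k' hk')
  omega

open Classical in
lemma card_filter_iterate_mem_le (hP : ∀ p ∈ P, p + m ≤ S.h n) {x : ℝ} (hx : x ∈ S.lvlUnion n P) :
    ((Finset.range m).filter fun k => S.T^[k] x ∈ S.lvlUnion n P).card ≤ P.card := by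
  obtain ⟨p, hp, hxp⟩ := mem_lvlUnion.1 hx
  refine Finset.card_le_card_of_injOn (p + ·) (fun k hk => ?_) (add_right_injective p).injOn
  obtain ⟨hkm, hxk⟩ := Finset.mem_filter.1 hk
  obtain ⟨q, hq, hxq⟩ := mem_lvlUnion.1 hxk
  rw [Finset.mem_range] at hkm
  have := hP p hp
  have := hP q hq
  have lt_h : p + k < S.h n := by omega
  have mem_lvl : S.T^[k] x ∈ S.lvl n (p + k) := image_iterate_lvl lt_h ▸ mem_image_of_mem _ hxp
  obtain rfl := eq_of_mem_lvl lt_h (by omega) mem_lvl hxq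
  exact hq

lemma sum_μ_real_inter_image_lvl_zero_le (hM : S.M N < m) (hm : 2 * m ≤ S.h N)
    (hE : MeasurableSet E) (hE' : S.μ E ≠ ⊤) :
    ∑ k ∈ Finset.range m, S.μ.real (E ∩ S.T^[k] '' S.lvl 0 0) ≤
      (S.desc 0 0 N).card * S.μ.real E := by
  have refined (k : ℕ) : S.μ.real (E ∩ S.T^[k] '' S.lvl 0 0) =
      S.μ.real (E ∩ S.T^[k] '' S.lvlUnion N (S.desc 0 0 N)) :=
    congrArg ENNReal.toReal
      (μ_inter_image_iterate_congr (ae_eq_refl E) (lvlUnion_desc_zero_ae_eq N).symm k)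
  simp only [refined]
  exact sum_measureReal_inter_le hE hE' _
    (fun k _ => measurableSet_image_iterate k (measurableSet_lvlUnion _ _))
    fun x _ => card_filter_mem_image_iterate_le (fun p hp => add_le_h_of_mem_desc hM hm hp) x

lemma sum_μ_real_lvl_zero_inter_image_le (hM : S.M N < m) (hm : 2 * m ≤ S.h N)
    (hE : MeasurableSet E) (hEI : E ⊆ S.lvl 0 0) :
    ∑ k ∈ Finset.range m, S.μ.real (S.lvl 0 0 ∩ S.T^[k] '' E) ≤
      (S.desc 0 0 N).card * S.μ.real E := by
  set U := S.lvlUnion N (S.desc 0 0 N)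
  have hU : MeasurableSet U := measurableSet_lvlUnion _ _
  have inter_ae_eq : (E ∩ U : Set ℝ) =ᵐ[S.μ] E := by
    have := (ae_eq_refl E).inter (lvlUnion_desc_zero_ae_eq (S := S) N)
    rwa [inter_eq_left.2 hEI] at this
  have pulled_back (k : ℕ) : S.μ.real (S.lvl 0 0 ∩ S.T^[k] '' E) =
      S.μ.real (E ∩ U ∩ S.T^[k] ⁻¹' U) := by
    rw [measureReal_def, μ_inter_image_iterate_congr (lvlUnion_desc_zero_ae_eq N).symm
      inter_ae_eq.symm, inter_comm, ← image_inter_preimage, μ_image_iterate, measureReal_def]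
    exact (hE.inter hU).inter (S.T.measurable.iterate k hU)
  simp only [pulled_back]
  rw [← measureReal_congr inter_ae_eq]
  exact sum_measureReal_inter_le (hE.inter hU) (μ_ne_top (inter_subset_left.trans hEI)) _
    (fun k _ => S.T.measurable.iterate k hU)
    fun x hx => card_filter_iterate_mem_le (fun p hp => add_le_h_of_mem_desc hM hm hp) hx.2

end RankOne

/-! ### Rational weak mixing along a subsequence -/

lemma abs_mul_sub_mul_le {x y x' y' ε : ℝ} (hx : |x| ≤ 1) (hy' : |y'| ≤ 1) (hxε : |x - x'| ≤ ε)
    (hyε : |y - y'| ≤ ε) : |x * y - x' * y'| ≤ 2 * ε :=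
  calc |x * y - x' * y'| = |x * (y - y') + (x - x') * y'| := by ring_nf
    _ ≤ |x| * |y - y'| + |x - x'| * |y'| := by
        rw [← abs_mul, ← abs_mul]
        exact abs_add_le _ _
    _ ≤ 1 * ε + ε * 1 := by
        have := (abs_nonneg _).trans hxε
        gcongr
    _ = 2 * ε := by ring

lemma inter_image_symmDiff_subset {α β : Type*} (f : α → β) {I A A' : Set β} {J B B' : Set α}
    (hA : A ⊆ I) (hA' : A' ⊆ I) (hB : B ⊆ J) (hB' : B' ⊆ J) :
    symmDiff (A ∩ f '' B) (A' ∩ f '' B') ⊆ symmDiff A A' ∩ f '' J ∪ I ∩ f '' symmDiff B B' := by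
  rintro _ (⟨⟨hzA, x, hxB, rfl⟩, hz'⟩ | ⟨⟨hzA', x, hxB', rfl⟩, hz⟩)
  · by_cases hzA' : f x ∈ A'
    · exact Or.inr ⟨hA hzA, x, Or.inl ⟨hxB, fun hxB' => hz' ⟨hzA', x, hxB', rfl⟩⟩, rfl⟩
    · exact Or.inl ⟨Or.inl ⟨hzA, hzA'⟩, x, hB hxB, rfl⟩
  · by_cases hzA : f x ∈ A
    · exact Or.inr ⟨hA' hzA', x, Or.inr ⟨hxB', fun hxB => hz ⟨hzA, x, hxB, rfl⟩⟩, rfl⟩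
    · exact Or.inl ⟨Or.inr ⟨hzA', hzA⟩, x, hB' hxB', rfl⟩

namespace RankOne

variable {S : RankOne} {A B A' B' : Set ℝ} {ε v : ℝ} {j m N : ℕ} {P Q : Finset ℕ}

lemma abs_μ_real_sub_le (hA : MeasurableSet A) (hA' : MeasurableSet A') (hAI : A ⊆ S.lvl 0 0)
    (hAI' : A' ⊆ S.lvl 0 0) : |S.μ.real A - S.μ.real A'| ≤ S.μ.real (symmDiff A A') :=
  abs_measureReal_sub_le_measureReal_symmDiff' hA.nullMeasurableSet hA'.nullMeasurableSet
    (μ_ne_top hAI) (μ_ne_top hAI')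

lemma symmDiff_subset_lvl_zero (hAI : A ⊆ S.lvl 0 0) (hAI' : A' ⊆ S.lvl 0 0) :
    symmDiff A A' ⊆ S.lvl 0 0 :=
  symmDiff_subset_union.trans (union_subset hAI hAI')

lemma abs_μ_real_inter_image_sub_le (hA : MeasurableSet A) (hA' : MeasurableSet A')
    (hB : MeasurableSet B) (hB' : MeasurableSet B') (hAI : A ⊆ S.lvl 0 0) (hAI' : A' ⊆ S.lvl 0 0)
    (hBI : B ⊆ S.lvl 0 0) (hBI' : B' ⊆ S.lvl 0 0) (k : ℕ) :
    |S.μ.real (A ∩ S.T^[k] '' B) - S.μ.real (A' ∩ S.T^[k] '' B')| ≤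
      S.μ.real (symmDiff A A' ∩ S.T^[k] '' S.lvl 0 0) +
        S.μ.real (S.lvl 0 0 ∩ S.T^[k] '' symmDiff B B') := by
  refine (abs_μ_real_sub_le (hA.inter (measurableSet_image_iterate k hB))
    (hA'.inter (measurableSet_image_iterate k hB')) (inter_subset_left.trans hAI)
    (inter_subset_left.trans hAI')).trans ((measureReal_mono
      (inter_image_symmDiff_subset _ hAI hAI' hBI hBI') (μ_ne_top ?_)).trans
      (measureReal_union_le _ _))
  exact union_subset (inter_subset_left.trans (symmDiff_subset_lvl_zero hAI hAI'))
    inter_subset_left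

lemma abs_corrDefect_le (hA : MeasurableSet A) (hA' : MeasurableSet A')
    (hB : MeasurableSet B) (hB' : MeasurableSet B') (hAI : A ⊆ S.lvl 0 0) (hAI' : A' ⊆ S.lvl 0 0)
    (hBI : B ⊆ S.lvl 0 0) (hBI' : B' ⊆ S.lvl 0 0)
    (hAε : S.μ.real (symmDiff A A') ≤ ε) (hBε : S.μ.real (symmDiff B B') ≤ ε) (k : ℕ) :
    |S.corrDefect A B k| ≤ |S.corrDefect A' B' k| +
      (S.μ.real (symmDiff A A' ∩ S.T^[k] '' S.lvl 0 0) +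
        S.μ.real (S.lvl 0 0 ∩ S.T^[k] '' symmDiff B B')) + 2 * ε * S.u (S.lvl 0 0) k := by
  have abs_le_one {E : Set ℝ} (hE : E ⊆ S.lvl 0 0) : |S.μ.real E| ≤ 1 :=
    (abs_of_nonneg measureReal_nonneg).trans_le (μ_real_le_one hE)
  have product_le := mul_le_mul_of_nonneg_right (abs_mul_sub_mul_le (abs_le_one hAI)
    (abs_le_one hBI') ((abs_μ_real_sub_le hA hA' hAI hAI').trans hAε)
    ((abs_μ_real_sub_le hB hB' hBI hBI').trans hBε)) (u_lvl_zero_nonneg (S := S) k)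
  rw [← abs_of_nonneg (u_lvl_zero_nonneg (S := S) k), ← abs_mul,
    abs_of_nonneg (u_lvl_zero_nonneg (S := S) k)] at product_le
  have decompose : S.corrDefect A B k = S.corrDefect A' B' k +
      (S.μ.real (A ∩ S.T^[k] '' B) - S.μ.real (A' ∩ S.T^[k] '' B')) -
      (S.μ.real A * S.μ.real B - S.μ.real A' * S.μ.real B') * S.u (S.lvl 0 0) k := by
    rw [corrDefect, corrDefect]
    ring
  rw [decompose]
  refine (abs_sub _ _).trans (add_le_add ((abs_add_le _ _).trans ?_) product_le)
  gcongr
  exact abs_μ_real_inter_image_sub_le hA hA' hB hB' hAI hAI' hBI hBI' k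

lemma sum_abs_corrDefect_le (hM : S.M N < m) (hm : 2 * m ≤ S.h N) (hA : MeasurableSet A)
    (hA' : MeasurableSet A') (hB : MeasurableSet B)
    (hB' : MeasurableSet B') (hAI : A ⊆ S.lvl 0 0)
    (hAI' : A' ⊆ S.lvl 0 0) (hBI : B ⊆ S.lvl 0 0) (hBI' : B' ⊆ S.lvl 0 0)
    (hAε : S.μ.real (symmDiff A A') ≤ ε) (hBε : S.μ.real (symmDiff B B') ≤ ε) :
    ∑ k ∈ Finset.range m, |S.corrDefect A B k| ≤
      ∑ k ∈ Finset.range m, |S.corrDefect A' B' k| +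
        2 * ε * ((S.desc 0 0 N).card + S.a (S.lvl 0 0) m) := by
  calc _ ≤ ∑ k ∈ Finset.range m, |S.corrDefect A' B' k| +
        (∑ k ∈ Finset.range m, S.μ.real (symmDiff A A' ∩ S.T^[k] '' S.lvl 0 0) +
          ∑ k ∈ Finset.range m, S.μ.real (S.lvl 0 0 ∩ S.T^[k] '' symmDiff B B')) +
        2 * ε * S.a (S.lvl 0 0) m := by
        rw [a, Finset.mul_sum, ← Finset.sum_add_distrib, ← Finset.sum_add_distrib,
          ← Finset.sum_add_distrib]
        exact Finset.sum_le_sum fun k _ =>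
          abs_corrDefect_le hA hA' hB hB' hAI hAI' hBI hBI' hAε hBε k
    _ ≤ ∑ k ∈ Finset.range m, |S.corrDefect A' B' k| +
        ((S.desc 0 0 N).card * ε + (S.desc 0 0 N).card * ε) + 2 * ε * S.a (S.lvl 0 0) m := by
        have sum_A_le := sum_μ_real_inter_image_lvl_zero_le hM hm (hA.symmDiff hA')
          (μ_ne_top (symmDiff_subset_lvl_zero hAI hAI'))
        have sum_B_le := sum_μ_real_lvl_zero_inter_image_le hM hm (hB.symmDiff hB')
          (symmDiff_subset_lvl_zero hBI hBI')
        gcongr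
        · exact sum_A_le.trans (by gcongr)
        · exact sum_B_le.trans (by gcongr)
    _ = _ := by ring

lemma inv_a_mul_sum_abs_corrDefect_le (hM : S.M N < m) (hm : 2 * m ≤ S.h N) (hjN : j ≤ N)
    (hv : DiffShiftVarLE (S.desc j 0 N) v) (hP : P ⊆ S.desc 0 0 j) (hQ : Q ⊆ S.desc 0 0 j)
    (hA : MeasurableSet A) (hB : MeasurableSet B) (hAI : A ⊆ S.lvl 0 0) (hBI : B ⊆ S.lvl 0 0)
    (hAε : S.μ.real (symmDiff A (S.lvlUnion j P)) ≤ ε)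
    (hBε : S.μ.real (symmDiff B (S.lvlUnion j Q)) ≤ ε) :
    (S.a (S.lvl 0 0) m)⁻¹ * ∑ k ∈ Finset.range m, |S.corrDefect A B k| ≤
      4 * (S.h j * v) + 6 * ε := by
  have card_le := card_desc_le_two_mul_a hM hm
  have card_pos := card_desc_pos (S := S) N.zero_le
  have hε : 0 ≤ ε := measureReal_nonneg.trans hAε
  have hv_nonneg : 0 ≤ v :=
    nonneg_of_mul_nonneg_left hv.bound_nonneg (pow_pos (card_desc_pos hjN) 2)
  rw [inv_mul_le_iff₀ (by linarith)]
  calc _ ≤ 2 * (S.h j * v * (S.desc 0 0 N).card) +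
        2 * ε * ((S.desc 0 0 N).card + S.a (S.lvl 0 0) m) :=
        (sum_abs_corrDefect_le hM hm hA (measurableSet_lvlUnion j P) hB (measurableSet_lvlUnion j Q)
          hAI (lvlUnion_subset_lvl_zero hP) hBI (lvlUnion_subset_lvl_zero hQ) hAε hBε).trans
          (by gcongr; exact sum_abs_corrDefect_lvlUnion_le hM hm hjN hv hP hQ)
    _ ≤ 2 * (S.h j * v * (2 * S.a (S.lvl 0 0) m)) +
        2 * ε * (2 * S.a (S.lvl 0 0) m + S.a (S.lvl 0 0) m) := by gcongr
    _ = _ := by ring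

/-- The differences of the descendants in column `N` of a level of column `j` become invariant
under the unit shift as `N → ∞`. -/
def AsympShiftInvariant (S : RankOne) : Prop :=
  ∀ j, ∀ v > 0, ∀ᶠ N in atTop, DiffShiftVarLE (S.desc j 0 N) v

theorem AsympShiftInvariant.tendsto_corrDefect (hS : S.AsympShiftInvariant) {m : ℕ → ℕ}
    (hM : ∀ n, S.M (n + 1) < m n) (hm : ∀ n, 2 * m n ≤ S.h (n + 1)) (hA : MeasurableSet A)
    (hAI : A ⊆ S.lvl 0 0) (hB : MeasurableSet B) (hBI : B ⊆ S.lvl 0 0) :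
    Tendsto (fun i => (S.a (S.lvl 0 0) (m i))⁻¹ *
      ∑ k ∈ Finset.range (m i), |S.corrDefect A B k|) atTop (nhds 0) := by
  have a_nonneg (i : ℕ) : 0 ≤ S.a (S.lvl 0 0) i :=
    Finset.sum_nonneg fun k _ => u_lvl_zero_nonneg k
  refine tendsto_order.2 ⟨fun b hb => Eventually.of_forall fun i => hb.trans_le
    (mul_nonneg (inv_nonneg.2 (a_nonneg _)) (Finset.sum_nonneg fun _ _ => abs_nonneg _)),
    fun ε hε => ?_⟩
  obtain ⟨j, ⟨P, hP, hAP⟩, Q, hQ, hBQ⟩ :=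
    ((eventually_exists_lvlUnion_symmDiff_le hA hAI (ε := ε / 24) (by positivity)).and
      (eventually_exists_lvlUnion_symmDiff_le hB hBI (ε := ε / 24) (by positivity))).exists
  have h_pos : (0 : ℝ) < S.h j := Nat.cast_pos.2 (h_pos j)
  have small_var := (hS j (ε / (8 * S.h j)) (by positivity)).and (eventually_ge_atTop j)
  filter_upwards [(tendsto_add_atTop_nat 1).eventually small_var] with i ⟨hv, hji⟩
  calc _ ≤ 4 * (S.h j * (ε / (8 * S.h j))) + 6 * (ε / 24) :=
        inv_a_mul_sum_abs_corrDefect_le (hM i) (hm i) hji hv hP hQ hA hB hAI hBI hAP hBQ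
    _ = ε / 2 + 6 * (ε / 24) := by
        field_simp
        ring
    _ < ε := by linarith

namespace ExpGrowing

lemma two_mul_r_mul_h_le (hS : S.ExpGrowing) (n : ℕ) : 2 * (S.r n * S.h n) ≤ S.h (n + 1) := by
  obtain ⟨r, hr⟩ := Nat.exists_eq_add_one_of_ne_zero (r_pos (S := S) n).ne'
  have hs := hS n
  have r_mul_le : r * S.h n ≤ stackOffset (S.h n) (S.s n) r := by
    simpa [stackOffset] using
      Finset.card_nsmul_le_sum (Finset.range r) (fun i => S.h n + S.s n i) (S.h n) (by simp)
  rw [h_succ, hr, stackOffset_succ, Nat.add_sub_cancel] at hs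
  rw [h_succ, hr, stackOffset_succ, add_mul, one_mul]
  omega

lemma M_succ_lt (hS : S.ExpGrowing) (n : ℕ) : S.M (n + 1) < S.h (n + 1) / 2 := by
  have two_le : 2 ≤ S.h (n + 1) := by
    have := hS.two_mul_r_mul_h_le n
    have := mul_pos (r_pos (S := S) n) (h_pos (S := S) n)
    omega
  rw [M, Finset.sup_lt_iff (by simp; omega)]
  intro x hx
  rw [desc_succ n.zero_le, Hset_eq_image] at hx
  obtain ⟨y, hy, _, hoffset, rfl⟩ := Finset.mem_add.1 hx
  obtain ⟨k, hk, rfl⟩ := Finset.mem_image.1 hoffset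
  have := stackOffset_add_add_lt (S.s n) (lt_h_of_mem_desc hy) (Finset.mem_range.1 hk)
  have := hS n
  rw [← h_succ] at *
  simp only [id]
  omega

lemma strictMono_half_h (hS : S.ExpGrowing) : StrictMono fun n => S.h (n + 1) / 2 := by
  refine strictMono_nat_of_lt_succ fun n => ?_
  have := hS.two_mul_r_mul_h_le (n + 1)
  have := Nat.mul_le_mul_right (S.h (n + 1)) (S.hr (n + 1))
  have := h_pos (S := S) (n + 1)
  omega

lemma two_pow_le_h_mul_w (hS : S.ExpGrowing) (n : ℕ) : (2 : ℝ) ^ n ≤ S.h n * S.w n := by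
  induction n with
  | zero => simp [S.h0, S.w0]
  | succ n ih =>
    have growth : (2 : ℝ) * (S.r n * S.h n) ≤ S.h (n + 1) := mod_cast hS.two_mul_r_mul_h_le n
    have := w_pos (S := S) (n + 1)
    calc (2 : ℝ) ^ (n + 1) = 2 * 2 ^ n := pow_succ' 2 n
      _ ≤ 2 * (S.h n * S.w n) := by gcongr
      _ = 2 * (S.r n * S.h n) * S.w (n + 1) := by rw [w_eq_mul_succ n]; ring
      _ ≤ _ := by gcongr

lemma volume_X (hS : S.ExpGrowing) : volume S.X = ⊤ := by
  by_contra hX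
  obtain ⟨n, hn⟩ := pow_unbounded_of_one_lt (volume S.X).toReal (one_lt_two (α := ℝ))
  have column_le : S.h n * S.w n ≤ (volume S.X).toReal :=
    calc S.h n * S.w n = S.μ.real (S.lvlUnion n (Finset.range (S.h n))) := by
          rw [μ_real_lvlUnion fun p hp => Finset.mem_range.1 hp, Finset.card_range]
      _ ≤ (volume S.X).toReal :=
          ENNReal.toReal_mono hX ((measure_mono (subset_univ _)).trans_eq (by simp [μ]))
  linarith [hS.two_pow_le_h_mul_w n]

end ExpGrowing

end RankOne

/-! ### Staircases -/

section StaircaseBound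

lemma staircase_step_le {t v c : ℝ} (ht : 0 ≤ t) (hv : v ≤ 2) (hvc : t * v ≤ c) :
    (1 - t / (t + 1) ^ 2) * v + 2 / (t + 1) ^ 2 ≤ (c + 4 * (1 / (t + 1))) / (t + 1) :=
  calc _ = (t * v + (v + 2) * (1 / (t + 1))) / (t + 1) := by
        field_simp
        ring
    _ ≤ (c + 4 * (1 / (t + 1))) / (t + 1) := by
        gcongr
        linarith

lemma tendsto_add_mul_harmonic_div (c c' : ℝ) :
    Tendsto (fun N : ℕ => (c + c' * ∑ k ∈ Finset.range (N + 1), 1 / ((k : ℝ) + 1)) / (N + 1)) atTop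
      (nhds 0) := by
  have cesaro := (tendsto_one_div_add_atTop_nhds_zero_nat (𝕜 := ℝ)).cesaro.comp
    (tendsto_add_atTop_nat 1)
  have lim := ((tendsto_one_div_add_atTop_nhds_zero_nat (𝕜 := ℝ)).const_mul c).add
    (cesaro.const_mul c')
  rw [mul_zero, mul_zero, add_zero] at lim
  refine lim.congr fun N => ?_
  rw [Function.comp_apply]
  push_cast
  ring

end StaircaseBound

namespace RankOne

variable {S : RankOne} {j N : ℕ}

/-- Column `n` is cut into `n + 2` subcolumns, and `k` spacers are added above the `k`-th one,
except for the last subcolumn, which is unconstrained. -/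
structure IsStaircase (S : RankOne) : Prop where
  r_eq : ∀ n, S.r n = n + 2
  s_eq : ∀ n, ∀ k ≤ n, S.s n k = k

namespace IsStaircase

lemma diffShiftVarLE_desc_succ (hS : S.IsStaircase) (hjN : j ≤ N) {v : ℝ}
    (hv : DiffShiftVarLE (S.desc j 0 N) v) :
    DiffShiftVarLE (S.desc j 0 (N + 1))
      ((1 - (N + 1 : ℝ) / (N + 1 + 1) ^ 2) * v + 2 / (N + 1 + 1 : ℝ) ^ 2) := by
  have key := hv.of_staircase (r := N + 1) (b := stackOffset (S.h N) (S.s N)) (c := S.h N)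
    (fun F => by rw [sum_desc_succ hjN, hS.r_eq])
    (fun k hk => by rw [stackOffset_succ, hS.s_eq N k (Nat.le_of_lt_succ hk)])
  exact_mod_cast key

lemma diffShiftVarLE_desc (hS : S.IsStaircase) (hjN : j ≤ N) :
    DiffShiftVarLE (S.desc j 0 N)
      ((2 * (j + 1) + 4 * ∑ k ∈ Finset.range (N + 1), 1 / ((k : ℝ) + 1)) / (N + 1)) := by
  induction N, hjN using Nat.le_induction with
  | base =>
    refine (diffShiftVarLE_two _).mono ((le_div_iff₀ (by positivity)).2 ?_)
    exact le_add_of_nonneg_right (by positivity)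
  | succ N hjN ih =>
    set c := 2 * ((j : ℝ) + 1) + 4 * ∑ k ∈ Finset.range (N + 1), 1 / ((k : ℝ) + 1)
    have hmin : DiffShiftVarLE (S.desc j 0 N) (min 2 (c / (N + 1))) := by
      rcases min_choice 2 (c / (N + 1 : ℝ)) with h | h <;> rw [h]
      exacts [diffShiftVarLE_two _, ih]
    refine (hS.diffShiftVarLE_desc_succ hjN hmin).mono
      ((staircase_step_le (c := c) (by positivity) (min_le_left _ _) ?_).trans_eq ?_)
    · exact (le_div_iff₀' (by positivity)).1 (min_le_right _ _)
    · rw [Finset.sum_range_succ _ (N + 1), mul_add 4, ← add_assoc]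
      push_cast
      rfl

lemma asympShiftInvariant (hS : S.IsStaircase) : S.AsympShiftInvariant := fun j v hv => by
  filter_upwards [(tendsto_add_mul_harmonic_div (2 * (j + 1)) 4).eventually_le_const hv,
    eventually_ge_atTop j] with N hN hjN
  exact (hS.diffShiftVarLE_desc hjN).mono hN

end IsStaircase

end RankOne

/-- The column heights of the staircase transformation `staircase`. They are needed before the
construction itself, since the number of spacers above the last subcolumn depends on them. -/
def staircaseHeight : ℕ → ℕ
  | 0 => 1
  | n + 1 => 2 * (stackOffset (staircaseHeight n) id (n + 1) + staircaseHeight n)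

lemma staircaseHeight_pos (n : ℕ) : 0 < staircaseHeight n := by
  induction n with
  | zero => exact one_pos
  | succ n ih => rw [staircaseHeight]; omega

/-- The infinite measure staircase: the last subcolumn of each column receives as many spacers as
there are levels below them, so that these spacers fill half of the next column. -/
def staircase : CutStack where
  r n := n + 2
  s n k := if k ≤ n then k else stackOffset (staircaseHeight n) id (n + 1) + staircaseHeight n
  two_le_r n := Nat.le_add_left 2 n
  last_spacer_pos n := by
    rw [if_neg (by omega)]
    exact Nat.add_pos_right _ (staircaseHeight_pos n)

lemma staircase_s_last (n : ℕ) : staircase.s n (n + 1) =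
    stackOffset (staircaseHeight n) id (n + 1) + staircaseHeight n :=
  if_neg (by omega)

lemma isStaircase_staircase : staircase.toRankOne.IsStaircase where
  r_eq _ := rfl
  s_eq _ _ hk := if_pos hk

lemma staircase_height (n : ℕ) : staircase.toRankOne.h n = staircaseHeight n := by
  induction n with
  | zero => rfl
  | succ n ih =>
    have offset_eq : stackOffset (staircaseHeight n) (staircase.s n) (n + 1) =
        stackOffset (staircaseHeight n) id (n + 1) :=
      Finset.sum_congr rfl fun k hk => congrArg _
        (isStaircase_staircase.s_eq n k (Finset.mem_range_succ_iff.1 hk))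
    rw [RankOne.h_succ, ih, staircaseHeight]
    change stackOffset _ (staircase.s n) (n + 2) = _
    rw [stackOffset_succ, offset_eq, staircase_s_last]
    ring

lemma expGrowing_staircase : staircase.toRankOne.ExpGrowing := fun n => by
  rw [staircase_height, staircaseHeight]
  exact (congrArg (2 * ·) (staircase_s_last n).symm).le


/-- There exist a rank-one transformation `T` of an infinite measure space
and an increasing sequence `(m i)` of positive integers along which `T` is subsequence
rationally weakly mixing on the unit interval `I`. -/
theorem statement5 :
    ∃ (S : RankOne) (m : ℕ → ℕ), StrictMono m ∧ (∀ i, 0 < m i) ∧ volume S.X = ⊤ ∧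
      ∀ A B : Set ℝ, MeasurableSet A → A ⊆ S.lvl 0 0 → MeasurableSet B → B ⊆ S.lvl 0 0 →
        Tendsto (fun i => (S.a (S.lvl 0 0) (m i))⁻¹ *
            ∑ k ∈ Finset.range (m i),
              |(S.μ (A ∩ (⇑S.T)^[k] '' B)).toReal -
                (S.μ A).toReal * (S.μ B).toReal * S.u (S.lvl 0 0) k|)
          atTop (nhds 0) := by
  have hS : staircase.toRankOne.ExpGrowing := expGrowing_staircase
  refine ⟨staircase.toRankOne, fun i => staircase.toRankOne.h (i + 1) / 2, hS.strictMono_half_h,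
    fun i => (Nat.zero_le _).trans_lt (hS.M_succ_lt i), hS.volume_X, fun A B hA hAI hB hBI => ?_⟩
  exact isStaircase_staircase.asympShiftInvariant.tendsto_corrDefect hS.M_succ_lt
    (fun i => Nat.mul_div_le _ 2) hA hAI hB hBI
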